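/- arXiv:1506.03155 — 2 statements merged into one kernel-verified Lean document; each statement's English description precedes it below -/
import Mathlib

section
/- Let Δ_1, …, Δ_k be integral convex polytopes in ℝ^n and let f : ℝ^n → ℝ be a polynomial of degree d. Then the function Φ(m_1, …, m_k) = Σ_{x ∈ ℤ^n} f(x) · (χ_{Δ_1}^{m_1} * ⋯ * χ_{Δ_k}^{m_k})(x), defined for all (m_1,…,m_k) ∈ ℤ^k (using inverses of the χ_{Δ_i} in the ring of convex chains for negative exponents), agrees with the restriction to ℤ^k of a polynomial on ℝ^k of degree at most n + d. In particular, for nonnegative m_i, Φ(m_1,…,m_k) = Σ_{x ∈ (m_1Δ_1+⋯+m_kΔ_k) ∩ ℤ^n} f(x). -/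
open Pointwise

/-- An integral (lattice) polytope: the convex hull of a nonempty finite set of points of
`ℤⁿ ⊆ ℝⁿ`. -/
def IsLatticePolytope {n : ℕ} (P : Set (Fin n → ℝ)) : Prop :=
  ∃ s : Finset (Fin n → ℤ), s.Nonempty ∧ P = convexHull ℝ ↑(s.image fun v i => (v i : ℝ))

/-- The additive group `Z(ℤⁿ)` of integral convex chains. -/
def intChainGroup (n : ℕ) : AddSubgroup ((Fin n → ℝ) → ℤ) :=
  AddSubgroup.closure
    {f | ∃ P, IsLatticePolytope P ∧ f = Set.indicator P (1 : (Fin n → ℝ) → ℤ)}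

open Finset in
lemma euler_one {ι : Type*} [Fintype ι] (c : ι → ℤ) (K : ι → Set ℝ)
    (hc : ∀ i, IsCompact (K i)) (hv : ∀ i, Convex ℝ (K i))
    (h : ∀ x, ∑ i, c i * (K i).indicator 1 x = 0) :
    ∑ i, c i * (open Classical in if (K i).Nonempty then 1 else 0) = 0 := by
  classical
  have key : ∀ b : ℝ, ∑ i, c i * (if (K i).Nonempty ∧ sSup (K i) = b then 1 else 0) = 0 := by
    intro b
    have ev : ∀ i, ∀ᶠ y in nhdsWithin b (Set.Ioi b),
        (K i).indicator (1 : ℝ → ℤ) b - (K i).indicator 1 y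
          = if (K i).Nonempty ∧ sSup (K i) = b then 1 else 0 := by
      intro i
      by_cases hne : (K i).Nonempty
      · have hs : sSup (K i) ∈ K i := (hc i).sSup_mem hne
        have hle : ∀ y ∈ K i, y ≤ sSup (K i) := fun y hy => le_csSup (hc i).bddAbove hy
        rcases lt_trichotomy (sSup (K i)) b with hb | hb | hb
        · filter_upwards [self_mem_nhdsWithin] with y hy
          have h1 : b ∉ K i := fun hh => absurd (hle _ hh) (not_le.2 hb)
          have h2 : y ∉ K i := fun hh => absurd (hle _ hh) (not_le.2 (hb.trans hy))
          simp [h1, h2, hb.ne]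
        · filter_upwards [self_mem_nhdsWithin] with y hy
          have h1 : b ∈ K i := hb ▸ hs
          have h2 : y ∉ K i := fun hh => absurd (hle _ hh) (not_le.2 (hb.trans_lt hy))
          simp [h1, h2, hb, hne]
        · by_cases h1 : b ∈ K i
          · filter_upwards [Ioo_mem_nhdsGT hb] with y hy
            have h2 : y ∈ K i := (hv i).ordConnected.out h1 hs ⟨hy.1.le, hy.2.le⟩
            simp [h1, h2, hb.ne']
          · have : ∀ᶠ y in nhdsWithin b (Set.Ioi b), y ∉ K i :=
              nhdsWithin_le_nhds ((hc i).isClosed.isOpen_compl.mem_nhds h1)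
            filter_upwards [this] with y h2
            simp [h1, h2, hb.ne']
      · have : K i = ∅ := Set.not_nonempty_iff_eq_empty.1 hne
        simp [this]
    obtain ⟨y, hy⟩ := (Filter.eventually_all.2 ev).exists
    calc _ = ∑ i, c i * (K i).indicator 1 b - ∑ i, c i * (K i).indicator 1 y := by
          rw [← sum_sub_distrib]
          exact sum_congr rfl fun i _ => by rw [← hy i]; ring
      _ = 0 := by rw [h, h, sub_zero]
  have := Finset.sum_eq_zero (s := univ.image fun i => sSup (K i)) (fun b _ => key b)
  rw [sum_comm] at this
  refine Eq.trans ?_ this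
  refine sum_congr rfl fun i _ => ?_
  rw [← mul_sum]
  congr 1
  by_cases hne : (K i).Nonempty
  · simp [hne]
  · simp [hne]

open Finset in
lemma euler_all (N : ℕ) {ι : Type*} [Fintype ι] (c : ι → ℤ) (K : ι → Set (Fin N → ℝ))
    (hc : ∀ i, IsCompact (K i)) (hv : ∀ i, Convex ℝ (K i))
    (h : ∀ x, ∑ i, c i * (K i).indicator 1 x = 0) :
    ∑ i, c i * (open Classical in if (K i).Nonempty then 1 else 0) = 0 := by
  classical
  induction N with
  | zero =>
    refine Eq.trans ?_ (h default)
    refine sum_congr rfl fun i _ => ?_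
    congr 1
    rw [Set.indicator_apply]
    simp only [Pi.one_apply]
    congr 1
    simp only [eq_iff_iff]
    exact ⟨fun ⟨x, hx⟩ => by rwa [Subsingleton.elim default x], fun hx => ⟨_, hx⟩⟩
  | succ N ih =>
    let π : (Fin (N+1) → ℝ) →ₗ[ℝ] (Fin N → ℝ) := LinearMap.funLeft ℝ ℝ Fin.succ
    have hπ : Continuous π := by
      apply LinearMap.continuous_of_finiteDimensional
    have := ih (fun i => π '' K i) (fun i => (hc i).image hπ) (fun i => (hv i).linear_image π) ?_
    · simpa using this
    intro y
    let F : ι → Set ℝ := fun i => {t | (Fin.cons t y : Fin (N+1) → ℝ) ∈ K i}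
    have hF : ∀ i, F i = (fun x : Fin (N+1) → ℝ => x 0) '' (K i ∩ π ⁻¹' {y}) := by
      intro i
      ext t
      constructor
      · intro ht
        exact ⟨_, ⟨ht, by ext j; simp [π, LinearMap.funLeft_apply]⟩, by simp⟩
      · rintro ⟨x, ⟨hx, hxy⟩, rfl⟩
        have : (Fin.cons (x 0) y : Fin (N+1) → ℝ) = x := by
          have hxy : π x = y := hxy
          rw [← hxy]
          ext j
          refine Fin.cases ?_ (fun j => ?_) j <;> simp [π, LinearMap.funLeft_apply]
        simpa [F, this] using hx
    have e1 := euler_one c F (fun i => ?_) (fun i => ?_) (fun t => h _)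
    · refine Eq.trans ?_ e1
      refine sum_congr rfl fun i _ => ?_
      congr 1
      rw [Set.indicator_apply]
      simp only [Pi.one_apply]
      congr 1
      simp only [eq_iff_iff]
      rw [hF, Set.image_nonempty]
      rfl
    · rw [hF]
      exact ((hc i).inter_right ((isClosed_singleton).preimage hπ)).image (continuous_apply 0)
    · rw [hF]
      exact ((hv i).inter ((convex_singleton y).linear_preimage π)).linear_image
        (LinearMap.proj (R := ℝ) (φ := fun _ : Fin (N+1) => ℝ) 0)

open Finset in
/-- The chain identity behind `∏ (χ_Δ - χ_v) = 0`. -/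
lemma nerve_zero {N n : ℕ} [NeZero N] (a : Fin N → (Fin n → ℝ)) (x : Fin n → ℝ) :
    ∑ S : Finset (Fin N), (-1 : ℤ) ^ #S *
      Set.indicator ((((N - #S : ℕ) : ℝ) • convexHull ℝ (Set.range a) + {∑ i ∈ S, a i} :
        Set (Fin n → ℝ))) 1 x = 0 := by
  classical
  let K : Finset (Fin N) → Set (Fin N → ℝ) := fun S =>
    {l | (∀ i, (if i ∈ S then 1 else 0) ≤ l i) ∧ ∑ i, l i = N ∧ ∑ i, l i • a i = x}
  have hcl : ∀ S, IsClosed (K S) := by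
    intro S
    refine IsClosed.inter ?_ (IsClosed.inter ?_ ?_)
    · have : {l : Fin N → ℝ | ∀ i, (if i ∈ S then (1:ℝ) else 0) ≤ l i}
          = ⋂ i, {l | (if i ∈ S then (1:ℝ) else 0) ≤ l i} := by ext; simp
      change IsClosed {l : Fin N → ℝ | ∀ i, (if i ∈ S then (1:ℝ) else 0) ≤ l i}
      rw [this]
      exact isClosed_iInter fun i => isClosed_le continuous_const (continuous_apply i)
    · exact isClosed_eq (by fun_prop) continuous_const
    · exact isClosed_eq (by fun_prop) continuous_const
  have hK : ∀ S, IsCompact (K S) := by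
    intro S
    refine (isCompact_univ_pi (fun _ : Fin N => isCompact_Icc (a := (0:ℝ)) (b := N))).of_isClosed_subset
      (hcl S) ?_
    rintro l ⟨h1, h2, -⟩ i -
    have h0 : ∀ i, 0 ≤ l i := fun i => le_trans (by split_ifs <;> norm_num) (h1 i)
    exact ⟨h0 i, h2 ▸ single_le_sum (f := l) (fun i _ => h0 i) (mem_univ i)⟩
  have hcv : ∀ S, Convex ℝ (K S) := by
    rintro S l ⟨h1, h2, h3⟩ m ⟨g1, g2, g3⟩ s t hs ht hst
    refine ⟨fun i => ?_, ?_, ?_⟩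
    · have := mul_le_mul_of_nonneg_left (h1 i) hs
      have := mul_le_mul_of_nonneg_left (g1 i) ht
      have e : (if i ∈ S then (1:ℝ) else 0) = s * (if i ∈ S then (1:ℝ) else 0)
        + t * (if i ∈ S then (1:ℝ) else 0) := by rw [← add_mul, hst, one_mul]
      simp only [Pi.add_apply, Pi.smul_apply, smul_eq_mul]
      linarith
    · simp only [Pi.add_apply, Pi.smul_apply, smul_eq_mul, sum_add_distrib, ← mul_sum, h2, g2]
      rw [← add_mul, hst, one_mul]
    · simp only [Pi.add_apply, Pi.smul_apply, smul_eq_mul, add_smul, mul_smul, sum_add_distrib,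
        ← smul_sum, h3, g3]
      rw [← add_smul, hst, one_smul]
  have hN : (0:ℝ) < N := by exact_mod_cast Nat.pos_of_ne_zero (NeZero.ne N)
  have hz : ∀ l, ∑ S : Finset (Fin N), (-1 : ℤ) ^ #S * (K S).indicator 1 l = 0 := by
    intro l
    by_cases hl : l ∈ K ∅
    · have h1 : ∀ S, (K S).indicator (1 : (Fin N → ℝ) → ℤ) l = ∏ i ∈ S, (if 1 ≤ l i then 1 else 0) := by
        intro S
        rw [Set.indicator_apply, prod_ite_zero]
        simp only [Pi.one_apply, prod_const_one]
        congr 1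
        simp only [eq_iff_iff]
        constructor
        · rintro ⟨h, -⟩ i hi
          simpa [hi] using h i
        · intro h
          refine ⟨fun i => ?_, hl.2⟩
          by_cases hi : i ∈ S
          · simpa [hi] using h i hi
          · simpa [hi] using hl.1 i
      have h2 := prod_sub (fun _ => (1:ℤ)) (fun i => if 1 ≤ l i then 1 else 0) (univ : Finset (Fin N))
      simp only [prod_const_one, mul_one, powerset_univ] at h2
      simp only [h1]
      rw [← h2]
      obtain ⟨i, hi⟩ : ∃ i, 1 ≤ l i := by
        by_contra! hcon
        have := sum_lt_sum_of_nonempty (s := univ) (f := l) (g := fun _ => 1)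
          (univ_nonempty) (fun i _ => hcon i)
        rw [hl.2.1] at this
        simp at this
      exact prod_eq_zero (mem_univ i) (by simp [hi])
    · refine sum_eq_zero fun S _ => ?_
      have : l ∉ K S := fun h => hl ⟨fun i => le_trans (by split_ifs <;> simp_all) (h.1 i), h.2⟩
      simp [this]
  have := euler_all N (fun S : Finset (Fin N) => (-1 : ℤ) ^ #S) K hK hcv hz
  refine Eq.trans ?_ this
  refine sum_congr rfl fun S _ => ?_
  congr 1
  rw [Set.indicator_apply]
  simp only [Pi.one_apply]
  congr 1
  simp only [eq_iff_iff]
  have hSN : #S ≤ N := by simpa using card_le_univ S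
  have hhull : convexHull ℝ (Set.range a) = {y | ∃ m : Fin N → ℝ, (∀ i, 0 ≤ m i) ∧
      ∑ i, m i = 1 ∧ ∑ i, m i • a i = y} := by
    have h1 := convexHull_basis_eq_stdSimplex ℝ (Fin N)
    have h2 := congrArg (fun s => (Fintype.linearCombination ℝ a) '' s) h1
    simp only [LinearMap.image_convexHull, ← Set.range_comp] at h2
    have h3 : (⇑(Fintype.linearCombination ℝ a) ∘ fun i j => if i = j then (1:ℝ) else 0) = a := by
      funext i
      simp [Fintype.linearCombination_apply, ite_smul]
    rw [h3] at h2
    rw [h2]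
    ext y
    simp [stdSimplex, Fintype.linearCombination_apply, and_assoc]
  have hind : ∑ i, (if i ∈ S then (1:ℝ) else 0) = #S := by simp
  have hinda : ∑ i, (if i ∈ S then (1:ℝ) else 0) • a i = ∑ i ∈ S, a i := by simp [ite_smul]
  rw [hhull, Set.add_singleton]
  push_cast [hSN]
  constructor
  · rintro ⟨_, ⟨_, ⟨m, m0, m1, rfl⟩, rfl⟩, rfl⟩
    refine ⟨fun i => (N - #S : ℝ) * m i + if i ∈ S then 1 else 0, fun i => ?_, ?_, ?_⟩
    · have : (0:ℝ) ≤ (N - #S : ℝ) := by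
        rw [sub_nonneg]; exact_mod_cast hSN
      have := mul_nonneg this (m0 i)
      linarith
    · rw [sum_add_distrib, ← mul_sum, m1, hind]; ring
    · simp only [add_smul, sum_add_distrib, mul_smul, ← smul_sum]
      rw [hinda]
  · rintro ⟨l, l0, l1, l2⟩
    rcases hSN.eq_or_lt with hs | hs
    · have hl : ∀ i, l i = if i ∈ S then 1 else 0 := by
        have : ∑ i, (l i - if i ∈ S then 1 else 0) = 0 := by
          rw [sum_sub_distrib, l1, hind, hs, sub_self]
        intro i
        have := (sum_eq_zero_iff_of_nonneg (fun i _ => sub_nonneg.2 (l0 i))).1 this i (mem_univ i)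
        linarith
      refine ⟨0, ⟨a 0, ⟨Pi.single 0 1, fun i => ?_, by simp, ?_⟩, by simp [hs]⟩, ?_⟩
      · by_cases h : i = 0
        · subst h; simp
        · simp [h]
      · simp [Pi.single_apply, ite_smul]
      · simp only [zero_add]
        rw [← l2, ← hinda]
        simp only [hl]
    · have ht : (0:ℝ) < N - #S := by rw [sub_pos]; exact_mod_cast hs
      refine ⟨_, ⟨_, ⟨fun i => (N - #S : ℝ)⁻¹ * (l i - if i ∈ S then 1 else 0), fun i => ?_, ?_, rfl⟩, rfl⟩, ?_⟩
      · exact mul_nonneg (inv_nonneg.2 ht.le) (sub_nonneg.2 (l0 i))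
      · rw [← mul_sum, sum_sub_distrib, l1, hind, inv_mul_cancel₀ ht.ne']
      · simp only [mul_smul, ← smul_sum]
        rw [smul_inv_smul₀ ht.ne']
        simp only [sub_smul, sum_sub_distrib]
        rw [hinda, l2]
        simp

open Finset in
lemma unit_zpow_eq {S : Type*} [CommRing S] (U : Sˣ) (M : ℕ) (h : ((U : S) - 1) ^ M = 0) (m : ℤ) :
    ((U ^ m : Sˣ) : S) = ∑ j ∈ range M, ((Ring.choose m j : ℤ) : S) * ((U : S) - 1) ^ j := by
  obtain _ | M := M
  · have : (1 : S) = 0 := by simpa using h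
    exact (subsingleton_of_zero_eq_one this.symm).elim _ _
  set ε : S := (U : S) - 1 with hε
  have hU : (U : S) = 1 + ε := by rw [hε]; ring
  have step : ∀ m : ℤ, ∑ j ∈ range (M+1), ((Ring.choose (m+1) j : ℤ) : S) * ε ^ j
      = U * ∑ j ∈ range (M+1), ((Ring.choose m j : ℤ) : S) * ε ^ j := by
    intro m
    rw [hU, add_mul, one_mul, mul_sum, sum_range_succ' (fun j => ((Ring.choose m j : ℤ) : S) * ε ^ j),
      sum_range_succ', sum_range_succ (fun j => ε * (((Ring.choose m j : ℤ) : S) * ε ^ j))]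
    have h0 : ε * (((Ring.choose m M : ℤ) : S) * ε ^ M) = 0 := by
      rw [mul_left_comm, ← pow_succ', h, mul_zero]
    rw [h0]
    simp only [Ring.choose_succ_succ, Ring.choose_zero_right]
    push_cast
    simp only [add_mul, sum_add_distrib]
    have : ∑ x ∈ range M, ((Ring.choose m x : ℤ) : S) * ε ^ (x+1)
       = ∑ x ∈ range M, ε * (((Ring.choose m x : ℤ) : S) * ε ^ x) :=
      sum_congr rfl fun _ _ => by ring
    rw [this]; ring
  induction m using Int.induction_on with
  | zero =>
    rw [sum_range_succ']
    simp [Ring.choose_zero_succ]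
  | succ i ih => rw [step, ← ih, zpow_add_one, Units.val_mul, mul_comm]
  | pred i ih =>
    have := step (-i - 1)
    rw [sub_add_cancel, ← ih] at this
    rw [zpow_sub_one, Units.val_mul, this, mul_comm, ← mul_assoc, Units.inv_mul, one_mul]

lemma choose_poly (j : ℕ) : ∃ q : Polynomial ℝ, ∀ m : ℤ, q.eval (m : ℝ) = (Ring.choose m j : ℤ) := by
  refine ⟨Polynomial.C ((j.factorial : ℝ)⁻¹) * (descPochhammer ℤ j).map (Int.castRingHom ℝ), fun m => ?_⟩
  have h := Ring.map_choose (Int.castRingHom ℝ) m j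
  simp only [eq_intCast] at h
  rw [h, Ring.choose_eq_smul, Polynomial.eval_mul, Polynomial.eval_C, smul_eq_mul,
    ← Polynomial.aeval_eq_smeval, Polynomial.eval_map, Polynomial.aeval_def]
  rfl

open Finset in
lemma poly_exists {S : Type*} [CommRing S] {k : ℕ} (Lb : S →+ ℝ) (U : Fin k → Sˣ)
    (h : ∀ i, IsNilpotent ((U i : S) - 1)) :
    ∃ p : MvPolynomial (Fin k) ℝ, ∀ m : Fin k → ℤ,
      Lb ((∏ i, U i ^ m i : Sˣ) : S) = MvPolynomial.eval (fun i => (m i : ℝ)) p := by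
  choose M hM using h
  choose q hq using choose_poly
  refine ⟨∑ J ∈ Fintype.piFinset fun i => range (M i),
    MvPolynomial.C (Lb (∏ i, ((U i : S) - 1) ^ J i)) *
      ∏ i, Polynomial.aeval (MvPolynomial.X i : MvPolynomial (Fin k) ℝ) (q (J i)), fun m => ?_⟩
  rw [Units.coe_prod]
  simp only [fun i => unit_zpow_eq (U i) (M i) (hM i) (m i)]
  rw [prod_univ_sum, map_sum, map_sum]
  refine sum_congr rfl fun J _ => ?_
  rw [prod_mul_distrib, map_mul (MvPolynomial.eval _), map_prod (MvPolynomial.eval _), MvPolynomial.eval_C]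
  have e : ∀ i, MvPolynomial.eval (fun i => (m i : ℝ))
      (Polynomial.aeval (MvPolynomial.X i : MvPolynomial (Fin k) ℝ) (q (J i)))
      = ((Ring.choose (m i) (J i) : ℤ) : ℝ) := by
    intro i
    rw [← hq, ← MvPolynomial.coe_aeval_eq_eval]
    change MvPolynomial.aeval (fun i => (m i : ℝ)) _ = _
    rw [← Polynomial.aeval_algHom_apply, MvPolynomial.aeval_X]
    simp
  simp only [e]
  rw [← Int.cast_prod, ← Int.cast_prod, ← zsmul_eq_mul, map_zsmul, zsmul_eq_mul, mul_comm]

open Finset in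
lemma degree_bound {k D : ℕ} (p : MvPolynomial (Fin k) ℝ)
    (h : ∀ m : Fin k → ℕ, ∃ C : ℝ, ∀ t : ℕ, 1 ≤ t →
      |MvPolynomial.eval (fun i => ((t * m i : ℕ) : ℝ)) p| ≤ C * (t:ℝ) ^ D) :
    p.totalDegree ≤ D := by
  by_contra! hlt
  have hp : p ≠ 0 := by rintro rfl; simp at hlt
  have hne : MvPolynomial.homogeneousComponent p.totalDegree p ≠ 0 := by
    obtain ⟨s, hs, hs'⟩ := exists_mem_eq_sup p.support (by simpa using hp)
      (fun s => s.sum fun _ e => e)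
    intro h0
    have := congrArg (MvPolynomial.coeff s) h0
    rw [MvPolynomial.coeff_homogeneousComponent, if_pos] at this
    · exact (MvPolynomial.mem_support_iff.1 hs) (by simpa using this)
    · rw [MvPolynomial.totalDegree, hs']; rfl
  obtain ⟨m, hm⟩ : ∃ m : Fin k → ℕ, MvPolynomial.eval (fun i => (m i : ℝ))
      (MvPolynomial.homogeneousComponent p.totalDegree p) ≠ 0 := by
    by_contra! hcon
    refine hne (MvPolynomial.funext_set (fun _ => Set.range (Nat.cast : ℕ → ℝ))
      (fun _ => Set.infinite_range_of_injective Nat.cast_injective) fun x hx => ?_)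
    choose m hm using fun i => hx i (Set.mem_univ i)
    have : x = fun i => (m i : ℝ) := by ext i; exact (hm i).symm
    rw [this, hcon, map_zero]
  obtain ⟨C, hC⟩ := h m
  have hhom : ∀ (j : ℕ) (t : ℝ), MvPolynomial.eval (fun i => t * m i)
      (MvPolynomial.homogeneousComponent j p) = t ^ j * MvPolynomial.eval (fun i => (m i : ℝ))
        (MvPolynomial.homogeneousComponent j p) := by
    intro j t
    have hj := MvPolynomial.homogeneousComponent_isHomogeneous j p
    rw [MvPolynomial.eval_eq', MvPolynomial.eval_eq', mul_sum]
    refine sum_congr rfl fun s hs => ?_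
    have := hj (MvPolynomial.mem_support_iff.1 hs)
    have hs' : ∑ i, s i = j := by
      rw [← this, Finsupp.weight_apply, Finsupp.sum_fintype] <;> simp
    simp only [mul_pow, prod_mul_distrib, prod_pow_eq_pow_sum, hs']
    ring
  set q : Polynomial ℝ := ∑ j ∈ range (p.totalDegree + 1),
    Polynomial.C (MvPolynomial.eval (fun i => (m i : ℝ))
        (MvPolynomial.homogeneousComponent j p)) * Polynomial.X ^ j with hq
  have hqe : ∀ t : ℝ, q.eval t = MvPolynomial.eval (fun i => t * m i) p := by
    intro t
    conv_rhs => rw [← MvPolynomial.sum_homogeneousComponent p]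
    rw [map_sum, hq, Polynomial.eval_finsetSum]
    refine sum_congr rfl fun j _ => ?_
    rw [hhom, Polynomial.eval_mul, Polynomial.eval_C, Polynomial.eval_pow, Polynomial.eval_X, mul_comm]
  have hqc : q.coeff p.totalDegree ≠ 0 := by
    rw [hq, Polynomial.finsetSum_coeff, sum_eq_single p.totalDegree]
    · simpa using hm
    · intro b _ hb
      rw [Polynomial.coeff_C_mul_X_pow, if_neg hb.symm]
    · simp
  have hdeg : (Polynomial.X ^ D : Polynomial ℝ).degree < q.degree := by
    rw [Polynomial.degree_X_pow]
    exact lt_of_lt_of_le (by exact_mod_cast hlt) (Polynomial.le_degree_of_ne_zero hqc)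
  have ht := (Polynomial.abs_div_tendsto_atTop_atTop_of_degree_gt q (Polynomial.X ^ D) hdeg
    (pow_ne_zero _ Polynomial.X_ne_zero)).comp (tendsto_natCast_atTop_atTop (R := ℝ))
  obtain ⟨t, ht1, ht2⟩ := ((ht.eventually_gt_atTop C).and (Filter.eventually_ge_atTop 1)).exists
  have h1 := hC t ht2
  have hpos : (0:ℝ) < (t:ℝ) ^ D := by positivity
  simp only [Function.comp, hqe, Polynomial.eval_pow, Polynomial.eval_X, abs_div,
    abs_of_pos hpos] at ht1
  rw [lt_div_iff₀ hpos] at ht1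
  push_cast at h1
  linarith

/-- The real vector of an integer vector. -/
def rv {n : ℕ} (v : Fin n → ℤ) : Fin n → ℝ := fun i => (v i : ℝ)

lemma rv_add {n : ℕ} (v w : Fin n → ℤ) : rv (v + w) = rv v + rv w := by
  ext i; simp [rv]

lemma lp_singleton {n : ℕ} (v : Fin n → ℤ) : IsLatticePolytope {rv v} :=
  ⟨{v}, by simp, by simp; rfl⟩

lemma lp_add {n : ℕ} {P Q : Set (Fin n → ℝ)} (hP : IsLatticePolytope P)
    (hQ : IsLatticePolytope Q) : IsLatticePolytope (P + Q) := by
  classical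
  obtain ⟨s, hs, rfl⟩ := hP
  obtain ⟨t, ht, rfl⟩ := hQ
  refine ⟨s + t, hs.add ht, ?_⟩
  rw [← convexHull_add]
  congr 1
  simp only [Finset.coe_image, Finset.coe_add]
  exact (Set.image_add (⟨⟨rv, by ext i; simp [rv]⟩, rv_add⟩ : (Fin n → ℤ) →+ (Fin n → ℝ))).symm

lemma lp_convex {n : ℕ} {P : Set (Fin n → ℝ)} (hP : IsLatticePolytope P) : Convex ℝ P := by
  obtain ⟨s, hs, rfl⟩ := hP
  exact convex_convexHull _ _

lemma lp_nonempty {n : ℕ} {P : Set (Fin n → ℝ)} (hP : IsLatticePolytope P) : P.Nonempty := by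
  obtain ⟨s, hs, rfl⟩ := hP
  simpa using hs

lemma lp_bdd {n : ℕ} {P : Set (Fin n → ℝ)} (hP : IsLatticePolytope P) :
    ∃ B : ℕ, 1 ≤ B ∧ ∀ y ∈ P, ∀ i, |y i| ≤ B := by
  obtain ⟨s, hs, rfl⟩ := hP
  have hb := (isBounded_convexHull (s := (↑(s.image fun v i => (v i : ℝ)) : Set (Fin n → ℝ)))).2
    (Finset.finite_toSet _).isBounded
  obtain ⟨C, hC⟩ := hb.exists_norm_le
  refine ⟨⌈C⌉₊ + 1, by simp, fun y hy i => ?_⟩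
  have h1 := norm_le_pi_norm y i
  have h2 := hC y hy
  have h3 := Nat.le_ceil C
  rw [Real.norm_eq_abs] at h1
  push_cast
  linarith

lemma box_subset {n : ℕ} {P : Set (Fin n → ℝ)} {B : ℕ} (hB : ∀ y ∈ P, ∀ i, |y i| ≤ B) :
    {x : Fin n → ℤ | rv x ∈ P} ⊆
      ↑(Finset.Icc (fun _ : Fin n => -(B:ℤ)) (fun _ => (B:ℤ))) := by
  intro x hx
  rw [Finset.coe_Icc]
  have : ∀ i, -(B:ℝ) ≤ (x i : ℝ) ∧ (x i : ℝ) ≤ B := fun i => abs_le.1 (hB _ hx i)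
  exact ⟨fun i => by exact_mod_cast (this i).1, fun i => by exact_mod_cast (this i).2⟩

lemma mem_chain {n : ℕ} {P : Set (Fin n → ℝ)} (hP : IsLatticePolytope P) :
    Set.indicator P (1 : (Fin n → ℝ) → ℤ) ∈ intChainGroup n :=
  AddSubgroup.subset_closure ⟨P, hP, rfl⟩

lemma chain_finite {n : ℕ} {α : (Fin n → ℝ) → ℤ} (hα : α ∈ intChainGroup n) :
    {x : Fin n → ℤ | α (rv x) ≠ 0}.Finite := by
  induction hα using AddSubgroup.closure_induction with
  | mem x hx =>
    obtain ⟨P, hP, rfl⟩ := hx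
    obtain ⟨B, -, hB⟩ := lp_bdd hP
    refine (Finset.finite_toSet _).subset (Set.Subset.trans ?_ (box_subset hB))
    intro x hx
    by_contra hn
    have hn' : rv x ∉ P := hn
    exact hx (Set.indicator_of_notMem hn' _)
  | zero => simp
  | add a b _ _ ha hb =>
    refine (ha.union hb).subset fun x hx => ?_
    by_contra hn
    simp only [Set.mem_union, Set.mem_ofPred_eq, not_or, not_not] at hn
    exact hx (by simp [hn])
  | neg a _ ha => simpa using ha

section Ring

variable {n : ℕ} {R : Type*} [CommRing R]

/-- The chain of functions values attached to a ring element. -/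
def chval (e : ↥(intChainGroup n) ≃+ R) (r : R) : (Fin n → ℝ) → ℤ := (e.symm r : ↥(intChainGroup n))

/-- `r` represents the indicator of the lattice polytope `P`. -/
def ChRep (e : ↥(intChainGroup n) ≃+ R) (r : R) (P : Set (Fin n → ℝ)) : Prop :=
  IsLatticePolytope P ∧ chval e r = Set.indicator P 1

/-- The multiplication is Minkowski multiplication. -/
def IsMink (e : ↥(intChainGroup n) ≃+ R) : Prop :=
  ∀ (P Q : Set (Fin n → ℝ)), IsLatticePolytope P → IsLatticePolytope Q →
      ∀ (hP : Set.indicator P (1 : (Fin n → ℝ) → ℤ) ∈ intChainGroup n)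
        (hQ : Set.indicator Q (1 : (Fin n → ℝ) → ℤ) ∈ intChainGroup n)
        (hPQ : Set.indicator (P + Q) (1 : (Fin n → ℝ) → ℤ) ∈ intChainGroup n),
        e ⟨_, hP⟩ * e ⟨_, hQ⟩ = e ⟨_, hPQ⟩

variable {e : ↥(intChainGroup n) ≃+ R}

lemma val_inj {r s : R} (h : chval e r = chval e s) : r = s :=
  e.symm.injective (Subtype.ext h)

lemma val_add (r s : R) : chval e (r + s) = chval e r + chval e s := by simp [chval]

lemma val_zero : chval e (0 : R) = 0 := by simp [chval]

lemma val_neg (r : R) : chval e (-r) = - chval e r := by simp [chval]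

lemma val_sum {ι : Type*} (s : Finset ι) (g : ι → R) (x : Fin n → ℝ) :
    chval e (∑ i ∈ s, g i) x = ∑ i ∈ s, chval e (g i) x := by
  simp [chval]

lemma val_zmul (c : ℤ) (r : R) (x : Fin n → ℝ) : chval e ((c : R) * r) x = c * chval e r x := by
  rw [← zsmul_eq_mul, chval, map_zsmul]
  simp [chval]

lemma rep_of {P : Set (Fin n → ℝ)} (hP : IsLatticePolytope P) :
    ChRep e (e ⟨_, mem_chain hP⟩) P := ⟨hP, by simp [chval]⟩

lemma ChRep.eq {r : R} {P : Set (Fin n → ℝ)} (h : ChRep e r P) : r = e ⟨_, mem_chain h.1⟩ :=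
  val_inj (e := e) (h.2.trans (rep_of h.1).2.symm)

lemma ChRep.mul (hm : IsMink e) {r s : R} {P Q : Set (Fin n → ℝ)} (h : ChRep e r P) (h' : ChRep e s Q) :
    ChRep e (r * s) (P + Q) := by
  rw [h.eq, h'.eq, hm P Q h.1 h'.1 _ _ (mem_chain (lp_add h.1 h'.1))]
  exact rep_of (lp_add h.1 h'.1)

lemma ring_induction {p : R → Prop} (h : ∀ r P, ChRep e r P → p r) (h0 : p 0)
    (ha : ∀ r s, p r → p s → p (r + s)) (hn : ∀ r, p r → p (-r)) (r : R) : p r := by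
  have key : ∀ (α : (Fin n → ℝ) → ℤ) (hα : α ∈ intChainGroup n), p (e ⟨α, hα⟩) := by
    intro α hα
    induction hα using AddSubgroup.closure_induction with
    | mem x hx =>
      obtain ⟨P, hP, rfl⟩ := hx
      exact h _ P (rep_of hP)
    | zero =>
      rw [← map_zero e] at h0
      exact h0
    | add a b ha' hb' iha ihb =>
      have := ha _ _ iha ihb
      rw [← map_add] at this
      exact this
    | neg a ha' iha =>
      have := hn _ iha
      rw [← map_neg] at this
      exact this
  have := key _ (e.symm r).2
  simpa using this

/-- The ring element of a lattice point. -/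
noncomputable def pt (e : ↥(intChainGroup n) ≃+ R) (v : Fin n → ℤ) : R := e ⟨_, mem_chain (lp_singleton v)⟩

lemma rep_pt (v : Fin n → ℤ) : ChRep e (pt e v) {rv v} := rep_of (lp_singleton v)

lemma rep_one (hm : IsMink e) : ChRep e (1 : R) {0} := by
  have h0 : rv (0 : Fin n → ℤ) = 0 := by ext i; simp [rv]
  have h := rep_pt (e := e) 0
  rw [h0] at h
  have : ∀ r : R, pt e 0 * r = r := by
    refine ring_induction (e := e) ?_ ?_ ?_ ?_
    · intro r P hr
      have := h.mul hm hr
      rw [Set.singleton_add] at this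
      simp only [zero_add, Set.image_id'] at this
      exact val_inj (e := e) (this.2.trans hr.2.symm)
    · simp
    · intro r s hr hs; rw [mul_add, hr, hs]
    · intro r hr; rw [mul_neg, hr]
  rw [← this 1, mul_one]
  exact h

lemma ChRep.npow (hm : IsMink e) {r : R} {P : Set (Fin n → ℝ)} (h : ChRep e r P) (j : ℕ) :
    ChRep e (r ^ j) ((j : ℝ) • P) := by
  induction j with
  | zero =>
    simp only [pow_zero, Nat.cast_zero]
    rw [Set.zero_smul_set (lp_nonempty h.1)]
    exact rep_one hm
  | succ j ih =>
    have := ih.mul hm h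
    rw [pow_succ]
    push_cast
    rw [(lp_convex h.1).add_smul (by positivity) zero_le_one, one_smul]
    exact this

lemma ChRep.prod (hm : IsMink e) {ι : Type*} (s : Finset ι) (r : ι → R) (P : ι → Set (Fin n → ℝ))
    (h : ∀ i, ChRep e (r i) (P i)) : ChRep e (∏ i ∈ s, r i) (∑ i ∈ s, P i) := by
  classical
  induction s using Finset.induction_on with
  | empty => exact rep_one hm
  | insert a s ha ih =>
    rw [Finset.prod_insert ha, Finset.sum_insert ha]
    exact (h a).mul hm ih

lemma val_pt_mul (hm : IsMink e) (v : Fin n → ℤ) (r : R) (x : Fin n → ℝ) :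
    chval e (pt e v * r) (x + rv v) = chval e r x := by
  revert r
  refine ring_induction (e := e) ?_ ?_ ?_ ?_
  · intro r P hr
    rw [((rep_pt v).mul hm hr).2, hr.2, Set.singleton_add]
    have : x + rv v ∈ (fun b => rv v + b) '' P ↔ x ∈ P := by
      rw [add_comm]; simp
    by_cases hx : x ∈ P
    · rw [Set.indicator_of_mem hx, Set.indicator_of_mem (this.2 hx)]; rfl
    · rw [Set.indicator_of_notMem hx, Set.indicator_of_notMem (fun h => hx (this.1 h))]
  · rw [mul_zero, val_zero]; rfl
  · intro r s hr hs
    rw [mul_add, val_add, val_add, Pi.add_apply, Pi.add_apply, hr, hs]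
  · intro r hr
    rw [mul_neg, val_neg, val_neg, Pi.neg_apply, Pi.neg_apply, hr]

open Finset in
lemma prod_vanish (hm : IsMink e) {N : ℕ} [NeZero N] (a : Fin N → (Fin n → ℤ)) {u : R}
    (hu : ChRep e u (convexHull ℝ (Set.range fun i => rv (a i)))) :
    ∏ i, (u - pt e (a i)) = 0 := by
  classical
  rw [prod_sub]
  apply val_inj (e := e)
  funext x
  rw [val_sum, val_zero, powerset_univ]
  refine Eq.trans ?_ (nerve_zero (fun i => rv (a i)) x)
  refine sum_congr rfl fun S _ => ?_
  have h1 : ChRep e ((∏ i ∈ univ \ S, u) * ∏ i ∈ S, pt e (a i))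
      ((((N - #S : ℕ) : ℝ) • convexHull ℝ (Set.range fun i => rv (a i)) + {∑ i ∈ S, rv (a i)})) := by
    rw [prod_const, ← compl_eq_univ_sdiff, card_compl, Fintype.card_fin]
    refine (hu.npow hm _).mul hm ?_
    have := ChRep.prod hm S (fun i => pt e (a i)) (fun i => {rv (a i)}) (fun i => rep_pt _)
    have hs : ∑ i ∈ S, ({rv (a i)} : Set (Fin n → ℝ)) = {∑ i ∈ S, rv (a i)} := by
      clear this
      induction S using Finset.induction_on with
      | empty => simp; rfl
      | insert b S hb ih =>
        rw [sum_insert hb, sum_insert hb, ih (mem_univ S), Set.singleton_add_singleton]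
    rwa [hs] at this
  have h2 : (-1 : R) ^ #S = (((-1) ^ #S : ℤ) : R) := by push_cast; rfl
  rw [h2, mul_assoc, val_zmul, h1.2]

/-- The functional `r ↦ ∑ g(x) r(x)`. -/
noncomputable def Lf (e : ↥(intChainGroup n) ≃+ R) (g : (Fin n → ℤ) → ℝ) : R →+ ℝ where
  toFun r := ∑ᶠ x : Fin n → ℤ, g x * (chval e r (rv x) : ℝ)
  map_zero' := by simp [val_zero]
  map_add' r s := by
    have hf : ∀ r, (Function.support fun x : Fin n → ℤ => g x * (chval e r (rv x) : ℝ)).Finite := by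
      intro r
      refine (chain_finite (e.symm r).2).subset fun x hx => ?_
      intro h0
      exact hx (by simp [chval, h0])
    rw [← finsum_add_distrib (hf r) (hf s)]
    congr 1; funext x
    rw [val_add]
    simp [mul_add]

lemma Lf_sub (g h : (Fin n → ℤ) → ℝ) (r : R) : Lf e (g - h) r = Lf e g r - Lf e h r := by
  have hf : ∀ g : (Fin n → ℤ) → ℝ,
      (Function.support fun x : Fin n → ℤ => g x * (chval e r (rv x) : ℝ)).Finite := by
    intro g
    refine (chain_finite (e.symm r).2).subset fun x hx => ?_
    intro h0
    exact hx (by simp [chval, h0])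
  change (∑ᶠ x, _) = (∑ᶠ x, _) - (∑ᶠ x, _)
  rw [← finsum_sub_distrib (hf g) (hf h)]
  congr 1; funext x
  simp [sub_mul]

lemma Lf_pt (hm : IsMink e) (g : (Fin n → ℤ) → ℝ) (v : Fin n → ℤ) (r : R) :
    Lf e g (pt e v * r) = Lf e (fun x => g (x + v)) r := by
  change (∑ᶠ x, _) = (∑ᶠ x, _)
  rw [← finsum_comp_equiv (Equiv.addRight v)]
  congr 1; funext x
  simp only [Equiv.coe_addRight]
  rw [rv_add, val_pt_mul hm]

lemma Lf_diff (hm : IsMink e) (g : (Fin n → ℤ) → ℝ) (v : Fin n → ℤ) (M : ℕ) (r : R) :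
    Lf e g ((pt e v - 1) ^ M * r) = Lf e ((fwdDiff v)^[M] g) r := by
  induction M generalizing g with
  | zero => simp
  | succ M ih =>
    rw [Function.iterate_succ_apply, ← ih, pow_succ', mul_assoc, sub_mul, one_mul, map_sub, Lf_pt hm,
      ← Lf_sub]
    rfl

end Ring

lemma fwdDiff_poly {n : ℕ} (f : MvPolynomial (Fin n) ℝ) (v : Fin n → ℤ) :
    (fwdDiff v)^[f.totalDegree + 1] (fun x => MvPolynomial.eval (rv x) f) = 0 := by
  funext x
  let q : Polynomial ℝ := MvPolynomial.aeval
    (fun i => Polynomial.C (x i : ℝ) + Polynomial.C (v i : ℝ) * Polynomial.X) f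
  have hq : q.natDegree < f.totalDegree + 1 := by
    have := MvPolynomial.aeval_natDegree_le (m := f.totalDegree) (n := 1) f le_rfl
      (fun i => Polynomial.C (x i : ℝ) + Polynomial.C (v i : ℝ) * Polynomial.X)
      (fun i => by compute_degree)
    simp only [q]
    omega
  have hqe : ∀ t : ℝ, q.eval t = MvPolynomial.eval (fun i => (x i : ℝ) + v i * t) f := by
    intro t
    simp only [q]
    rw [← Polynomial.coe_aeval_eq_eval, ← MvPolynomial.coe_aeval_eq_eval]
    change Polynomial.aeval t _ = MvPolynomial.aeval _ f
    rw [← AlgHom.comp_apply, MvPolynomial.comp_aeval]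
    simp
  have h0 := congrFun (Polynomial.fwdDiff_iter_eq_zero_of_degree_lt hq) 0
  rw [fwdDiff_iter_eq_sum_shift] at h0 ⊢
  refine Eq.trans ?_ h0
  refine Finset.sum_congr rfl fun j _ => ?_
  rw [hqe]
  congr 3
  funext i
  simp [rv, mul_comm]

open Finset in
lemma eval_bound {n : ℕ} (f : MvPolynomial (Fin n) ℝ) :
    ∃ C : ℝ, 0 ≤ C ∧ ∀ (B : ℝ) (x : Fin n → ℝ), 1 ≤ B → (∀ i, |x i| ≤ B) →
      |MvPolynomial.eval x f| ≤ C * B ^ f.totalDegree := by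
  refine ⟨∑ s ∈ f.support, |f.coeff s|, sum_nonneg fun _ _ => abs_nonneg _, fun B x hB hx => ?_⟩
  rw [MvPolynomial.eval_eq', sum_mul]
  refine (abs_sum_le_sum_abs _ _).trans (sum_le_sum fun s hs => ?_)
  rw [abs_mul]
  refine mul_le_mul_of_nonneg_left ?_ (abs_nonneg _)
  rw [abs_prod]
  calc ∏ i, |x i ^ s i| ≤ ∏ i, B ^ s i := by
        refine prod_le_prod (fun _ _ => abs_nonneg _) fun i _ => ?_
        rw [abs_pow]
        exact pow_le_pow_left₀ (abs_nonneg _) (hx i) _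
    _ = B ^ (∑ i, s i) := prod_pow_eq_pow_sum _ _ _
    _ ≤ B ^ f.totalDegree := by
        refine pow_le_pow_right₀ hB ?_
        have := MvPolynomial.le_totalDegree hs
        rwa [Finsupp.sum_fintype _ _ (fun _ => rfl)] at this

open Finset in
lemma growth {n : ℕ} (f : MvPolynomial (Fin n) ℝ) {Q : Set (Fin n → ℝ)}
    (hQ : IsLatticePolytope Q) :
    ∃ C : ℝ, ∀ t : ℕ, 1 ≤ t →
      |∑ᶠ x ∈ {x : Fin n → ℤ | rv x ∈ (t : ℝ) • Q}, MvPolynomial.eval (rv x) f|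
        ≤ C * (t : ℝ) ^ (n + f.totalDegree) := by
  classical
  obtain ⟨B, hB1, hB⟩ := lp_bdd hQ
  obtain ⟨C, hC0, hC⟩ := eval_bound f
  refine ⟨(3 * B) ^ n * (C * B ^ f.totalDegree), fun t ht => ?_⟩
  have hb : ∀ y ∈ (t : ℝ) • Q, ∀ i, |y i| ≤ ((t * B : ℕ) : ℝ) := by
    rintro _ ⟨y, hy, rfl⟩ i
    simp only [Pi.smul_apply, smul_eq_mul, abs_mul, Nat.abs_cast, Nat.cast_mul]
    exact mul_le_mul_of_nonneg_left (hB y hy i) (by positivity)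
  have hsub := box_subset hb
  have hfin : {x : Fin n → ℤ | rv x ∈ (t : ℝ) • Q}.Finite := (Finset.finite_toSet _).subset hsub
  rw [finsum_mem_eq_finite_toFinset_sum _ hfin]
  have htB : (1:ℝ) ≤ ((t * B : ℕ) : ℝ) := by exact_mod_cast Nat.mul_pos ht hB1
  have hcard : (#hfin.toFinset : ℝ) ≤ (3 * (t * B : ℕ)) ^ n := by
    have h1 : #hfin.toFinset ≤ #(Finset.Icc (fun _ : Fin n => -((t * B : ℕ):ℤ))
        (fun _ => ((t * B : ℕ):ℤ))) := by
      refine card_le_card fun x hx => ?_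
      exact_mod_cast hsub (hfin.mem_toFinset.1 hx)
    rw [Pi.card_Icc] at h1
    simp only [Int.card_Icc, prod_const, card_univ, Fintype.card_fin] at h1
    have h2 : (((t * B : ℕ) : ℤ) + 1 - -((t * B : ℕ):ℤ)).toNat ≤ 3 * (t * B) := by
      have : 1 ≤ t * B := Nat.mul_pos ht hB1
      omega
    exact_mod_cast h1.trans (Nat.pow_le_pow_left h2 n)
  calc |∑ x ∈ hfin.toFinset, MvPolynomial.eval (rv x) f|
      ≤ ∑ x ∈ hfin.toFinset, |MvPolynomial.eval (rv x) f| := abs_sum_le_sum_abs _ _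
    _ ≤ ∑ x ∈ hfin.toFinset, C * ((t * B : ℕ) : ℝ) ^ f.totalDegree :=
        sum_le_sum fun x hx => hC _ _ htB (hb _ (hfin.mem_toFinset.1 hx))
    _ = #hfin.toFinset * (C * ((t * B : ℕ) : ℝ) ^ f.totalDegree) := by simp
    _ ≤ (3 * (t * B : ℕ)) ^ n * (C * ((t * B : ℕ) : ℝ) ^ f.totalDegree) :=
        mul_le_mul_of_nonneg_right hcard (by positivity)
    _ = _ := by push_cast; ring

/-- The ideal of elements annihilating a functional. -/
def annIdeal {R : Type*} [CommRing R] (L : R →+ ℝ) : Ideal R where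
  carrier := {r | ∀ s, L (r * s) = 0}
  zero_mem' := by simp
  add_mem' {a b} ha hb s := by
    have ha : ∀ s, L (a * s) = 0 := ha
    have hb : ∀ s, L (b * s) = 0 := hb
    rw [add_mul, map_add, ha, hb, add_zero]
  smul_mem' c r hr s := by
    have hr : ∀ s, L (r * s) = 0 := hr
    rw [smul_eq_mul, mul_comm c, mul_assoc, hr]

lemma nil_of_prod {S : Type*} [CommRing S] {N : ℕ} (u : S) (T : Fin N → S)
    (hT : ∀ i, IsNilpotent (T i - 1)) (h : ∏ i, (u - T i) = 0) : IsNilpotent (u - 1) := by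
  rw [nilpotent_iff_mem_prime]
  intro J hJ
  have h0 : ∏ i, (u - T i) ∈ J := by rw [h]; exact J.zero_mem
  rw [hJ.prod_mem_iff] at h0
  obtain ⟨i, -, hi⟩ := h0
  have := J.add_mem hi (nilpotent_iff_mem_prime.1 (hT i) J hJ)
  simpa using this

/-- Let `Δ 1, …, Δ k` be integral convex polytopes in `ℝⁿ` and
`f : ℝⁿ → ℝ` a polynomial of degree `d`.  In the ring `Z(ℤⁿ)` of integral convex chains
(a commutative ring `R` identified additively with the chain group via `e` and whose
multiplication is Minkowski multiplication on indicators), the indicators `χ_{Δ i}` are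
units `u i`, and the function
`Φ(m₁,…,m_k) = Σ_{x ∈ ℤⁿ} f(x) · (χ_{Δ 1}^{m₁} * ⋯ * χ_{Δ k}^{m_k})(x)` (defined for all
`m ∈ ℤᵏ` using the inverses of the units for negative exponents) agrees with the
restriction to `ℤᵏ` of a polynomial on `ℝᵏ` of degree at most `n + d`; in particular, for
nonnegative `mᵢ`, `Φ(m) = Σ_{x ∈ (m₁Δ 1 + ⋯ + m_kΔ k) ∩ ℤⁿ} f(x)`. -/
theorem stmt11 {n k d : ℕ} (f : MvPolynomial (Fin n) ℝ) (hf : f.totalDegree = d)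
    {R : Type*} [CommRing R] (e : ↥(intChainGroup n) ≃+ R)
    (hmul : ∀ (P Q : Set (Fin n → ℝ)), IsLatticePolytope P → IsLatticePolytope Q →
      ∀ (hP : Set.indicator P (1 : (Fin n → ℝ) → ℤ) ∈ intChainGroup n)
        (hQ : Set.indicator Q (1 : (Fin n → ℝ) → ℤ) ∈ intChainGroup n)
        (hPQ : Set.indicator (P + Q) (1 : (Fin n → ℝ) → ℤ) ∈ intChainGroup n),
        e ⟨_, hP⟩ * e ⟨_, hQ⟩ = e ⟨_, hPQ⟩)
    (A : Fin k → Finset (Fin n → ℤ)) (hA : ∀ i, (A i).Nonempty)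
    (Δ : Fin k → Set (Fin n → ℝ))
    (hΔ : ∀ i, Δ i = convexHull ℝ ↑((A i).image fun v j => (v j : ℝ)))
    (u : Fin k → Rˣ)
    (hu : ∀ (i : Fin k) (hi : Set.indicator (Δ i) (1 : (Fin n → ℝ) → ℤ) ∈ intChainGroup n),
      (u i : R) = e ⟨_, hi⟩)
    (Φ : (Fin k → ℤ) → ℝ)
    (hΦ : ∀ m : Fin k → ℤ,
      Φ m = ∑ᶠ x : Fin n → ℤ,
        MvPolynomial.eval (fun i => (x i : ℝ)) f *
          ((((e.symm (((∏ i, u i ^ m i : Rˣ) : R)) : ↥(intChainGroup n)) :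
              (Fin n → ℝ) → ℤ) (fun i => (x i : ℝ)) : ℤ) : ℝ)) :
    ∃ p : MvPolynomial (Fin k) ℝ, p.totalDegree ≤ n + d ∧
      (∀ m : Fin k → ℤ, Φ m = MvPolynomial.eval (fun i => (m i : ℝ)) p) ∧
      (∀ m : Fin k → ℕ, Φ (fun i => (m i : ℤ)) =
        ∑ᶠ x ∈ {x : Fin n → ℤ | (fun i => (x i : ℝ)) ∈ ∑ i, (m i : ℝ) • Δ i},
          MvPolynomial.eval (fun i => (x i : ℝ)) f) := by
  classical
  have hm : IsMink e := hmul
  have hlp : ∀ i, IsLatticePolytope (Δ i) := fun i => ⟨A i, hA i, hΔ i⟩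
  have hrep : ∀ i, ChRep e (u i : R) (Δ i) := fun i => by
    rw [hu i (mem_chain (hlp i))]
    exact rep_of (hlp i)
  set F : (Fin n → ℤ) → ℝ := fun x => MvPolynomial.eval (rv x) f with hF
  have hΦL : ∀ m, Φ m = Lf e F ((∏ i, u i ^ m i : Rˣ) : R) := fun m => hΦ m
  -- the nonnegative case
  have hQrep : ∀ m : Fin k → ℕ, ChRep e (((∏ i, u i ^ (m i : ℤ) : Rˣ)) : R)
      (∑ i, (m i : ℝ) • Δ i) := by
    intro m
    rw [Units.coe_prod]
    refine ChRep.prod hm _ _ _ fun i => ?_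
    rw [zpow_natCast, Units.val_pow_eq_pow_val]
    exact (hrep i).npow hm _
  have hnat : ∀ m : Fin k → ℕ, Φ (fun i => (m i : ℤ)) =
        ∑ᶠ x ∈ {x : Fin n → ℤ | rv x ∈ ∑ i, (m i : ℝ) • Δ i}, MvPolynomial.eval (rv x) f := by
    intro m
    rw [hΦL]
    change (∑ᶠ x, _) = _
    rw [(hQrep m).2]
    congr 1; funext x
    by_cases hx : rv x ∈ ∑ i, (m i : ℝ) • Δ i
    · rw [Set.indicator_of_mem hx, finsum_eq_if, if_pos (by exact hx)]
      simp [hF]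
    · rw [Set.indicator_of_notMem hx, finsum_eq_if, if_neg (by exact hx)]
      simp
  -- polynomiality
  let I : Ideal R := annIdeal (Lf e F)
  let q : R →+* R ⧸ I := Ideal.Quotient.mk I
  have hpt : ∀ v, IsNilpotent (q (pt e v) - 1) := by
    intro v
    refine ⟨f.totalDegree + 1, ?_⟩
    rw [← map_one q, ← map_sub, ← map_pow]
    refine Ideal.Quotient.eq_zero_iff_mem.2 fun s => ?_
    rw [Lf_diff hm, hF, fwdDiff_poly]
    change (∑ᶠ x, _) = _
    simp
  have hnil : ∀ i, IsNilpotent (q (u i) - 1) := by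
    intro i
    have hcard : (A i).card ≠ 0 := (Finset.card_pos.2 (hA i)).ne'
    have : NeZero (A i).card := ⟨hcard⟩
    let a : Fin (A i).card → (Fin n → ℤ) := fun j => ((A i).equivFin.symm j : Fin n → ℤ)
    have hr : Set.range (fun j => rv (a j)) = ↑((A i).image fun v j => (v j : ℝ)) := by
      ext y
      simp only [Set.mem_range, Finset.coe_image, Set.mem_image, Finset.mem_coe]
      constructor
      · rintro ⟨j, rfl⟩
        exact ⟨a j, ((A i).equivFin.symm j).2, rfl⟩
      · rintro ⟨v, hv, rfl⟩
        exact ⟨(A i).equivFin ⟨v, hv⟩, by simp [a]; rfl⟩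
    have h1 := prod_vanish hm a (u := (u i : R)) (by rw [hr, ← hΔ i]; exact hrep i)
    refine nil_of_prod (q (u i)) (fun j => q (pt e (a j))) (fun j => hpt _) ?_
    have := congrArg q h1
    rwa [map_prod, map_zero] at this
  let Lb : R ⧸ I →+ ℝ := QuotientAddGroup.lift I.toAddSubgroup (Lf e F) (fun r hr => by
    have hr : ∀ s, Lf e F (r * s) = 0 := hr
    simpa using hr 1)
  have hLb : ∀ r, Lb (q r) = Lf e F r := fun r => rfl
  obtain ⟨p, hp⟩ := poly_exists Lb (fun i => Units.map (q : R →* R ⧸ I) (u i)) hnil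
  have hpΦ : ∀ m : Fin k → ℤ, Φ m = MvPolynomial.eval (fun i => (m i : ℝ)) p := by
    intro m
    rw [← hp, hΦL, ← hLb]
    congr 1
    simp only [← map_zpow, ← map_prod]
    rfl
  refine ⟨p, ?_, hpΦ, hnat⟩
  subst hf
  refine degree_bound p fun m => ?_
  obtain ⟨C, hC⟩ := growth f (hQrep m).1
  refine ⟨C, fun t ht => ?_⟩
  have h1 := hpΦ (fun i => ((t * m i : ℕ) : ℤ))
  simp only [Int.cast_natCast] at h1
  rw [← h1, hnat]
  have h2 : ∑ i, ((t * m i : ℕ) : ℝ) • Δ i = (t : ℝ) • ∑ i, (m i : ℝ) • Δ i := by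
    rw [Finset.smul_sum]
    refine Finset.sum_congr rfl fun i _ => ?_
    rw [smul_smul, Nat.cast_mul]
  rw [h2]
  exact hC t ht
end

section
/- (Ehrhart reciprocity as a special case) For an integral convex polytope Δ ⊆ ℝ^n, let E(m) = #(mΔ ∩ ℤ^n) for integers m ≥ 0. Then E extends to a polynomial in m, and its value at m = −1 equals (−1)^{dim Δ} times the number of lattice points in the relative interior of Δ. -/
open Pointwise Module

/-- `c` gives the coordinates in the basis `(w i)` for `i` in `σ`, extended by zero. -/
def Coor {ι V : Type*} [Fintype ι] [DecidableEq ι] [AddCommGroup V] [Module ℝ V]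
    (w : ι → V) (σ : Finset ι) (c : V →ₗ[ℝ] (ι → ℝ)) : Prop :=
  (∀ x, ∑ i, c x i • w i = x) ∧ (∀ x, ∀ i, i ∉ σ → c x i = 0) ∧
    (∀ i ∈ σ, c (w i) = Pi.single i 1)

section basics
variable {ι V : Type*} [Fintype ι] [DecidableEq ι] [AddCommGroup V] [Module ℝ V]

lemma Coor.uniq {w : ι → V} {σ : Finset ι} {c : V →ₗ[ℝ] (ι → ℝ)} (h : Coor w σ c)
    (a : ι → ℝ) (ha : ∀ i, i ∉ σ → a i = 0) : c (∑ i, a i • w i) = a := by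
  have h1 : ∀ i, a i • c (w i) = a i • (Pi.single i 1 : ι → ℝ) := by
    intro i
    by_cases hi : i ∈ σ
    · rw [h.2.2 i hi]
    · simp [ha i hi]
  simp only [map_sum, map_smul, h1]
  ext j
  simp [Finset.sum_apply, Pi.single_apply]

lemma exists_coor (w : ι → V) (σ : Finset ι) (h1 : LinearIndepOn ℝ w (σ : Set ι))
    (h2 : ⊤ ≤ Submodule.span ℝ (w '' (σ : Set ι))) :
    (∃ c, Coor w σ c) := by
  have h2' : ⊤ ≤ Submodule.span ℝ (Set.range (fun i : (σ : Set ι) => w i)) := by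
    rwa [Set.image_eq_range] at h2
  let b : Basis (σ : Set ι) ℝ V := Basis.mk h1 h2'
  refine ⟨LinearMap.pi fun i => if h : i ∈ σ then b.coord ⟨i, h⟩ else 0, ?_, ?_, ?_⟩
  · intro x
    have := b.sum_repr x
    conv_rhs => rw [← this]
    rw [← Finset.sum_subset (Finset.subset_univ σ), ← Finset.sum_coe_sort σ]
    · apply Finset.sum_congr rfl
      intro i hi
      simp [b]
    · intro i _ hi
      simp [hi]
  · intro x i hi
    simp [hi]
  · intro i hi
    ext j
    by_cases hj : j ∈ σ
    · have : w i = b ⟨i, hi⟩ := by simp [b]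
      simp only [LinearMap.pi_apply, hj, dite_true, this, Basis.coord_apply, Basis.repr_self,
        Finsupp.single_apply, Pi.single_apply, Subtype.mk.injEq]
      simp only [eq_comm]
    · have : j ≠ i := fun h => hj (h ▸ hi)
      simp [hj, this]

lemma Coor.card {w : ι → V} {σ : Finset ι} {c : V →ₗ[ℝ] (ι → ℝ)} (h : Coor w σ c) :
    σ.card = finrank ℝ V := by
  have h1 : LinearIndependent ℝ (fun i : σ => w i) := by
    rw [Fintype.linearIndependent_iff]
    intro g hg i
    have := h.uniq (fun i => if hi : i ∈ σ then g ⟨i, hi⟩ else 0) (by intro i hi; simp [hi])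
    have h0 : ∑ i, (if hi : i ∈ σ then g ⟨i, hi⟩ else 0) • w i = 0 := by
      rw [← hg, ← Finset.sum_subset (Finset.subset_univ σ), ← Finset.sum_coe_sort σ]
      · apply Finset.sum_congr rfl
        intro i hi
        simp
      · intro i _ hi
        simp [hi]
    rw [h0, map_zero] at this
    have := congrFun this i
    simpa using this.symm
  have h2 : ⊤ ≤ Submodule.span ℝ (Set.range (fun i : σ => w i)) := by
    intro x _
    rw [← h.1 x]
    apply Submodule.sum_mem
    intro i _
    by_cases hi : i ∈ σ
    · exact Submodule.smul_mem _ _ (Submodule.subset_span ⟨⟨i, hi⟩, rfl⟩)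
    · simp [h.2.1 x i hi]
  have := finrank_eq_card_basis (Basis.mk h1 h2)
  simpa using this.symm

end basics

open Filter Topology in
lemma ev_sign (α β : ℝ) (hβ : β ≠ 0) : ∀ᶠ ε in 𝓝[>] (0 : ℝ),
    α + ε * β ≠ 0 ∧ (0 ≤ α + ε * β ↔ 0 < α ∨ (α = 0 ∧ 0 < β)) := by
  have hc : Tendsto (fun ε : ℝ => α + ε * β) (𝓝[>] 0) (𝓝 α) := by
    have : Continuous (fun ε : ℝ => α + ε * β) := by fun_prop
    have := this.tendsto 0
    simp only [zero_mul, add_zero] at this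
    exact this.mono_left nhdsWithin_le_nhds
  rcases lt_trichotomy α 0 with h | h | h
  · filter_upwards [hc.eventually (gt_mem_nhds h)] with ε hε
    refine ⟨hε.ne, ⟨fun h' => by linarith, ?_⟩⟩
    rintro (h' | h') <;> [linarith; linarith [h'.1]]
  · filter_upwards [self_mem_nhdsWithin] with ε hε
    have hε : 0 < ε := hε
    subst h
    refine ⟨by simp [hβ, hε.ne'], ?_⟩
    simp only [zero_add, lt_irrefl, true_and, false_or]
    constructor
    · intro h'
      have : 0 ≤ β := nonneg_of_mul_nonneg_right h' hε
      exact lt_of_le_of_ne this hβ.symm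
    · intro h'; positivity
  · filter_upwards [hc.eventually (lt_mem_nhds h)] with ε hε
    exact ⟨hε.ne', ⟨fun _ => Or.inl h, fun _ => hε.le⟩⟩

open Filter Topology in
/-- A positive vector avoiding the kernels of finitely many nonzero functionals. -/
lemma exists_generic {ι κ : Type*} [Fintype ι] (t : Finset κ) (φ : κ → (ι → ℝ) →ₗ[ℝ] ℝ)
    (hφ : ∀ k ∈ t, ∃ u, φ k u ≠ 0) :
    ∃ b : ι → ℝ, (∀ i, 0 < b i) ∧ ∀ k ∈ t, φ k b ≠ 0 := by
  classical
  induction t using Finset.induction_on with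
  | empty => exact ⟨fun _ => 1, by simp, by simp⟩
  | insert k t hk ih =>
    obtain ⟨b, hb, hb'⟩ := ih fun k hk => hφ k (Finset.mem_insert_of_mem hk)
    obtain ⟨u, hu⟩ := hφ k (Finset.mem_insert_self k t)
    have key : ∀ α β : ℝ, α ≠ 0 → ∀ᶠ ε in 𝓝[>] (0:ℝ), α + ε * β ≠ 0 := by
      intro α β hα
      by_cases hβ : β = 0
      · simp [hβ, hα]
      · exact (ev_sign α β hβ).mono fun _ h => h.1
    have key2 : ∀ i, ∀ᶠ ε in 𝓝[>] (0:ℝ), 0 < b i + ε * u i := by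
      intro i
      by_cases hβ : u i = 0
      · simp [hβ, hb]
      · filter_upwards [ev_sign (b i) (u i) hβ] with ε h
        exact lt_of_le_of_ne (h.2.2 (Or.inl (hb i))) h.1.symm
    have e1 : ∀ᶠ ε in 𝓝[>] (0:ℝ), ∀ i, 0 < b i + ε * u i := eventually_all.2 key2
    have e2 : ∀ᶠ ε in 𝓝[>] (0:ℝ), ∀ k ∈ t, φ k b + ε * φ k u ≠ 0 :=
      (Finset.eventually_all t).2 fun k hk => key _ _ (hb' k hk)
    obtain ⟨ε, h1, h2, h3⟩ := (e1.and (e2.and ((ev_sign (φ k b) (φ k u) hu)))).exists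
    refine ⟨b + ε • u, h1, ?_⟩
    intro j hj
    rcases Finset.mem_insert.1 hj with rfl | hj
    · simpa using h3.1
    · simpa using h2 j hj

section tri
variable {ι V : Type*} [Fintype ι] [DecidableEq ι] [NormedAddCommGroup V] [NormedSpace ℝ V]

lemma tri_unique (w : ι → V) (σ τ : Finset ι) (c d : V →ₗ[ℝ] (ι → ℝ)) (hσ : Coor w σ c)
    (hτ : Coor w τ d) (h : ι → ℝ)
    (h1 : ∀ j, j ∉ σ → ∑ i, c (w j) i * h i < h j)
    (h2 : ∀ j, j ∉ τ → ∑ i, d (w j) i * h i < h j)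
    (x : V) (hc : ∀ i, 0 ≤ c x i) (hd : ∀ i, 0 ≤ d x i)
    (hc' : ∀ i ∈ σ, c x i ≠ 0) : σ ⊆ τ := by
  have eq1 : ∀ (σ : Finset ι) (c : V →ₗ[ℝ] (ι → ℝ)), Coor w σ c →
      (∀ j, j ∉ σ → ∑ i, c (w j) i * h i < h j) → ∀ j, ∑ i, c (w j) i * h i ≤ h j := by
    intro σ c hσ h1 j
    by_cases hj : j ∈ σ
    · simp [hσ.2.2 j hj, Pi.single_apply]
    · exact (h1 j hj).le
  have eq2 : ∀ (c d : V →ₗ[ℝ] (ι → ℝ)), (∑ i, c x i • w i = x) →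
      ∑ i, d x i * h i = ∑ j, c x j * ∑ i, d (w j) i * h i := by
    intro c d hx
    conv_lhs => rw [← hx]
    simp only [map_sum, map_smul, Finset.sum_apply, Pi.smul_apply, smul_eq_mul, Finset.sum_mul,
      Finset.mul_sum]
    rw [Finset.sum_comm]
    simp only [mul_assoc]
  have le1 : ∑ i, c x i * h i ≤ ∑ i, d x i * h i := by
    rw [eq2 d c (hτ.1 x)]
    exact Finset.sum_le_sum fun j _ => mul_le_mul_of_nonneg_left (eq1 σ c hσ h1 j) (hd j)
  intro j hj
  by_contra hjt
  have lt : ∑ i, d x i * h i < ∑ i, c x i * h i := by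
    rw [eq2 c d (hσ.1 x)]
    refine Finset.sum_lt_sum (fun j _ => mul_le_mul_of_nonneg_left (eq1 τ d hτ h2 j) (hc j))
      ⟨j, Finset.mem_univ _, ?_⟩
    exact mul_lt_mul_of_pos_left (h2 j hjt) (lt_of_le_of_ne (hc j) (hc' j hj).symm)
  linarith

open Filter Topology in
lemma tri_exists (w : ι → V) (ht : V →ₗ[ℝ] ℝ) (hw : ∀ i, ht (w i) = 1)
    (hspan : ⊤ ≤ Submodule.span ℝ (Set.range w))
    (c : Finset ι → V →ₗ[ℝ] (ι → ℝ)) (B : Finset (Finset ι))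
    (hB : ∀ σ, σ ∈ B ↔ Coor w σ (c σ)) (hB' : ∀ σ d, Coor w σ d → σ ∈ B)
    (h : ι → ℝ) (hgen : ∀ σ ∈ B, ∀ j, j ∉ σ → ∑ i, c σ (w j) i * h i ≠ h j)
    (x : V) (hx : ∀ σ ∈ B, ∀ i ∈ σ, c σ x i ≠ 0) (a : ι → ℝ) (ha : ∀ i, 0 ≤ a i)
    (hax : ∑ i, a i • w i = x) :
    ∃ σ ∈ B, (∀ j, j ∉ σ → ∑ i, c σ (w j) i * h i < h j) ∧ ∀ i, 0 ≤ c σ x i := by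
  classical
  let K : Set (ι → ℝ) := {a | (∀ i, 0 ≤ a i) ∧ ∑ i, a i • w i = x}
  have hcl : IsClosed K := by
    have e1 : IsClosed {a : ι → ℝ | ∀ i, 0 ≤ a i} := by
      simp only [Set.ofPred_forall]
      exact isClosed_iInter fun i => isClosed_le continuous_const (continuous_apply i)
    have e2 : IsClosed {a : ι → ℝ | ∑ i, a i • w i = x} :=
      isClosed_eq (by fun_prop) continuous_const
    exact e1.inter e2
  have hsub : K ⊆ Set.Icc 0 (fun _ => ht x) := by
    rintro a ⟨h1, h2⟩
    refine ⟨h1, fun i => ?_⟩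
    rw [← h2]
    simp only [map_sum, map_smul, hw, smul_eq_mul, mul_one]
    exact Finset.single_le_sum (fun i _ => h1 i) (Finset.mem_univ i)
  have hK : IsCompact K := isCompact_Icc.of_isClosed_subset hcl hsub
  obtain ⟨a, ⟨ha, hax⟩, hmin⟩ := hK.exists_isMinOn ⟨a, ha, hax⟩
    (f := fun a => ∑ i, a i * h i) (by fun_prop)
  -- a basis inside the support
  let S : Set ι := {i | a i ≠ 0}
  obtain ⟨τ, hτS, -, hτspan, hτ⟩ := exists_linearIndepOn_extension
    (linearIndepOn_empty ℝ w) (Set.empty_subset S)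
  obtain ⟨σ', -, hτσ, hσspan, hσ'⟩ := exists_linearIndepOn_extension hτ (Set.subset_univ τ)
  let σ : Finset ι := σ'.toFinset
  have hσσ : (σ : Set ι) = σ' := by simp [σ]
  obtain ⟨d, hd⟩ := exists_coor w σ (by rwa [hσσ]) (by
    rw [hσσ]
    refine hspan.trans (Submodule.span_le.2 ?_)
    rwa [Set.image_univ] at hσspan)
  have hσB := hB' σ d hd
  have hC := (hB σ).1 hσB
  -- support of `x` is in `τ`
  have hxτ : x ∈ Submodule.span ℝ (w '' τ) := by
    rw [← hax]
    refine Submodule.sum_mem _ fun i _ => ?_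
    by_cases hi : a i = 0
    · simp [hi]
    · exact Submodule.smul_mem _ _ (hτspan ⟨i, hi, rfl⟩)
  have hz : ∀ y ∈ Submodule.span ℝ (w '' τ), ∀ i, i ∉ τ → c σ y i = 0 := by
    intro y hy i hi
    induction hy using Submodule.span_induction with
    | mem y hy =>
      obtain ⟨j, hj, rfl⟩ := hy
      rw [hC.2.2 j (by simp [σ, hτσ hj])]
      have : i ≠ j := fun e => hi (e ▸ hj)
      simp [this]
    | zero => simp
    | add y z _ _ h1 h2 => simp [h1, h2]
    | smul r y _ h1 => simp [h1]
  have hστ : ∀ i ∈ σ, i ∈ τ := by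
    intro i hi
    by_contra hn
    exact hx σ hσB i hi (hz x hxτ i hn)
  have hpos : ∀ i ∈ σ, 0 < a i := fun i hi => lt_of_le_of_ne (ha i) (hτS (hστ i hi)).symm
  -- perturbation
  have pert : ∀ j, ∀ t : ℝ, (∀ i, 0 ≤ a i + t * ((Pi.single j 1 : ι → ℝ) i - c σ (w j) i)) →
      0 ≤ t * (h j - ∑ i, c σ (w j) i * h i) := by
    intro j t ht'
    have hm : (fun i => a i + t * ((Pi.single j 1 : ι → ℝ) i - c σ (w j) i)) ∈ K := by
      refine ⟨ht', ?_⟩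
      simp only [add_smul, Finset.sum_add_distrib, hax, mul_smul, ← Finset.smul_sum, sub_smul,
        Finset.sum_sub_distrib, hC.1 (w j)]
      simp [Pi.single_apply]
    have := hmin hm
    simp only [Set.mem_ofPred_eq] at this
    simp only [add_mul, Finset.sum_add_distrib, mul_assoc, ← Finset.mul_sum, sub_mul,
        Finset.sum_sub_distrib] at this
    simp only [Pi.single_apply, ite_mul, one_mul, zero_mul, Finset.sum_ite_eq', Finset.mem_univ,
      if_true] at this
    linarith
  have small : ∀ i ∈ σ, ∀ β : ℝ, ∀ᶠ ε in 𝓝[>] (0:ℝ), 0 ≤ a i + ε * β := by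
    intro i hi β
    by_cases hβ : β = 0
    · simp [hβ, ha]
    · filter_upwards [ev_sign (a i) β hβ] with ε h
      exact h.2.2 (Or.inl (hpos i hi))
  have hlt : ∀ j, j ∉ σ → ∑ i, c σ (w j) i * h i < h j := by
    intro j hj
    have : ∀ᶠ ε in 𝓝[>] (0:ℝ), ∀ i ∈ σ, 0 ≤ a i + ε * ((Pi.single j 1 : ι → ℝ) i - c σ (w j) i) :=
      (Finset.eventually_all σ).2 fun i hi => small i hi _
    obtain ⟨ε, h1, h2⟩ := (this.and self_mem_nhdsWithin).exists
    have h2 : 0 < ε := h2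
    have := pert j ε (by
      intro i
      by_cases hi : i ∈ σ
      · exact h1 i hi
      · rw [hC.2.1 _ i hi]
        by_cases hij : i = j
        · subst hij; simp; linarith [ha i]
        · simp [hij, ha i])
    have := nonneg_of_mul_nonneg_right this h2
    exact lt_of_le_of_ne (by linarith) (hgen σ hσB j hj)
  have hzero : ∀ j, j ∉ σ → a j = 0 := by
    intro j hj
    by_contra hne
    have hjp : 0 < a j := lt_of_le_of_ne (ha j) (Ne.symm hne)
    have : ∀ᶠ ε in 𝓝[>] (0:ℝ), ∀ i ∈ σ,
        0 ≤ a i + ε * (-((Pi.single j 1 : ι → ℝ) i - c σ (w j) i)) :=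
      (Finset.eventually_all σ).2 fun i hi => small i hi _
    obtain ⟨ε, h1, h2, h3⟩ := (this.and ((eventually_mem_nhdsWithin (a := (0:ℝ)) (s := Set.Ioi 0)).and
      ((gt_mem_nhds hjp).filter_mono nhdsWithin_le_nhds))).exists
    have h2 : 0 < ε := h2
    have := pert j (-ε) (by
      intro i
      by_cases hi : i ∈ σ
      · have := h1 i hi; linarith
      · rw [hC.2.1 _ i hi]
        by_cases hij : i = j
        · subst hij; simp; linarith
        · simp [hij, ha i])
    have h5 := hlt j hj
    nlinarith
  refine ⟨σ, hσB, hlt, ?_⟩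
  rw [← hax, hC.uniq a hzero]
  exact ha

end tri

section decomp
variable {ι V : Type*} [Fintype ι] [DecidableEq ι] [NormedAddCommGroup V] [NormedSpace ℝ V]

/-- The cone of nonnegative combinations. -/
def InCone (w : ι → V) (x : V) : Prop := ∃ a : ι → ℝ, (∀ i, 0 ≤ a i) ∧ ∑ i, a i • w i = x

/-- The positive combinations. -/
def InPos (w : ι → V) (x : V) : Prop := ∃ a : ι → ℝ, (∀ i, 0 < a i) ∧ ∑ i, a i • w i = x

/-- Half-open simplicial cone. -/
def HO (c : V →ₗ[ℝ] (ι → ℝ)) (σ : Finset ι) (A : Finset ι) (x : V) : Prop :=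
  ∀ i ∈ σ, 0 < c x i ∨ (c x i = 0 ∧ i ∈ A)

open Filter Topology in
lemma ho_ev (w : ι → V) (σ : Finset ι) (c : V →ₗ[ℝ] (ι → ℝ)) (hc : Coor w σ c)
    (u : V) (hu : ∀ i ∈ σ, c u i ≠ 0) (x : V) :
    ∀ᶠ ε in 𝓝[>] (0:ℝ), (∀ i ∈ σ, c (x + ε • u) i ≠ 0) ∧
      ((∀ i, 0 ≤ c (x + ε • u) i) ↔ HO c σ (σ.filter fun i => 0 < c u i) x) := by
  have : ∀ᶠ ε in 𝓝[>] (0:ℝ), ∀ i ∈ σ, c x i + ε * c u i ≠ 0 ∧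
      (0 ≤ c x i + ε * c u i ↔ 0 < c x i ∨ (c x i = 0 ∧ 0 < c u i)) :=
    (Finset.eventually_all σ).2 fun i hi => ev_sign _ _ (hu i hi)
  filter_upwards [this] with ε h
  have e : ∀ i, c (x + ε • u) i = c x i + ε * c u i := by intro i; simp
  refine ⟨fun i hi => by rw [e]; exact (h i hi).1, ?_⟩
  constructor
  · intro h' i hi
    have := (h i hi).2.1 (by rw [← e]; exact h' i)
    simpa [hi] using this
  · intro h' i
    by_cases hi : i ∈ σ
    · rw [e, (h i hi).2]
      simpa [hi] using h' i hi
    · rw [hc.2.1 _ i hi]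

open Filter Topology in
lemma decomp_exists_unique (w : ι → V) (ht : V →ₗ[ℝ] ℝ) (hw : ∀ i, ht (w i) = 1)
    (hspan : ⊤ ≤ Submodule.span ℝ (Set.range w))
    (c : Finset ι → V →ₗ[ℝ] (ι → ℝ)) (B : Finset (Finset ι))
    (hB : ∀ σ, σ ∈ B ↔ Coor w σ (c σ)) (hB' : ∀ σ d, Coor w σ d → σ ∈ B)
    (h : ι → ℝ) (hgen : ∀ σ ∈ B, ∀ j, j ∉ σ → ∑ i, c σ (w j) i * h i ≠ h j)
    (T : Finset (Finset ι))
    (hT : ∀ σ, σ ∈ T ↔ σ ∈ B ∧ ∀ j, j ∉ σ → ∑ i, c σ (w j) i * h i < h j)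
    (u : V) (hu : ∀ σ ∈ B, ∀ i ∈ σ, c σ u i ≠ 0) (x : V)
    (hx : ∀ᶠ ε in 𝓝[>] (0:ℝ), InCone w (x + ε • u)) :
    ∃! σ, σ ∈ T ∧ HO (c σ) σ (σ.filter fun i => 0 < c σ u i) x := by
  have ev : ∀ᶠ ε in 𝓝[>] (0:ℝ), ∀ σ ∈ B, (∀ i ∈ σ, c σ (x + ε • u) i ≠ 0) ∧
      ((∀ i, 0 ≤ c σ (x + ε • u) i) ↔ HO (c σ) σ (σ.filter fun i => 0 < c σ u i) x) :=
    (Finset.eventually_all B).2 fun σ hσ => ho_ev w σ (c σ) ((hB σ).1 hσ) u (hu σ hσ) x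
  obtain ⟨ε, h1, ⟨a, ha, hax⟩⟩ := (ev.and hx).exists
  obtain ⟨σ, hσ, hσ1, hσ2⟩ := tri_exists w ht hw hspan c B hB hB' h hgen (x + ε • u)
    (fun σ hσ => (h1 σ hσ).1) a ha hax
  refine ⟨σ, ⟨(hT σ).2 ⟨hσ, hσ1⟩, (h1 σ hσ).2.1 hσ2⟩, ?_⟩
  rintro τ ⟨hτ, hτ'⟩
  obtain ⟨hτB, hτ1⟩ := (hT τ).1 hτ
  have hτ2 := (h1 τ hτB).2.2 hτ'
  apply Finset.Subset.antisymm
  · exact tri_unique w τ σ (c τ) (c σ) ((hB τ).1 hτB) ((hB σ).1 hσ) h hτ1 hσ1 _ hτ2 hσ2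
      (h1 τ hτB).1
  · exact tri_unique w σ τ (c σ) (c τ) ((hB σ).1 hσ) ((hB τ).1 hτB) h hσ1 hτ1 _ hσ2 hτ2
      (h1 σ hσ).1

open Filter Topology in
/-- The half-open decomposition of a cone and of its interior. -/
lemma exists_decomp (w : ι → V) (ht : V →ₗ[ℝ] ℝ) (hw : ∀ i, ht (w i) = 1)
    (hspan : ⊤ ≤ Submodule.span ℝ (Set.range w)) [Nonempty ι] :
    ∃ (T : Finset (Finset ι)) (c : Finset ι → V →ₗ[ℝ] (ι → ℝ)) (A : Finset ι → Finset ι),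
      (∀ σ ∈ T, Coor w σ (c σ) ∧ (A σ).Nonempty ∧ A σ ⊆ σ) ∧
      (∀ x, InCone w x → ∃! σ, σ ∈ T ∧ HO (c σ) σ (A σ) x) ∧
      (∀ x, ∀ σ ∈ T, HO (c σ) σ (A σ) x → InCone w x) ∧
      (∀ x, InPos w x → ∃! σ, σ ∈ T ∧ HO (c σ) σ (σ \ A σ) x) ∧
      (∀ x, ∀ σ ∈ T, HO (c σ) σ (σ \ A σ) x → InPos w x) := by
  classical
  let c : Finset ι → V →ₗ[ℝ] (ι → ℝ) := fun σ =>
    if hh : ∃ d, Coor w σ d then Classical.choose hh else 0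
  let B : Finset (Finset ι) := Finset.univ.filter fun σ => ∃ d, Coor w σ d
  have hcB : ∀ σ d, Coor w σ d → Coor w σ (c σ) := by
    intro σ d hd
    have hh : ∃ d, Coor w σ d := ⟨d, hd⟩
    simp only [c, dif_pos hh]
    exact Classical.choose_spec hh
  have hB : ∀ σ, σ ∈ B ↔ Coor w σ (c σ) := by
    intro σ
    simp only [B, Finset.mem_filter, Finset.mem_univ, true_and]
    exact ⟨fun ⟨d, hd⟩ => hcB σ d hd, fun hh => ⟨_, hh⟩⟩
  have hB' : ∀ σ d, Coor w σ d → σ ∈ B := fun σ d hd => (hB σ).2 (hcB σ d hd)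
  -- generic heights
  obtain ⟨h, -, hh⟩ := exists_generic (ι := ι)
    ((B ×ˢ (Finset.univ : Finset ι)).filter fun p => p.2 ∉ p.1)
    (fun p => (∑ i, (c p.1 (w p.2) i) • LinearMap.proj i) - LinearMap.proj p.2) (by
      rintro ⟨σ, j⟩ hp
      simp only [Finset.mem_filter, Finset.mem_product, Finset.mem_univ, and_true] at hp
      refine ⟨Pi.single j 1, ?_⟩
      simp [LinearMap.sum_apply, Pi.single_apply, ((hB σ).1 hp.1).2.1 (w j) j hp.2])
  have hgen : ∀ σ ∈ B, ∀ j, j ∉ σ → ∑ i, c σ (w j) i * h i ≠ h j := by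
    intro σ hσ j hj
    have := hh (σ, j) (by simp [hσ, hj])
    simpa [LinearMap.sum_apply, sub_eq_zero] using this
  -- generic interior vector
  obtain ⟨b, hb, hbg⟩ := exists_generic (ι := ι)
    ((B ×ˢ (Finset.univ : Finset ι)).filter fun p => p.2 ∈ p.1)
    (fun p => (LinearMap.proj p.2 ∘ₗ c p.1) ∘ₗ
      (∑ i, (LinearMap.proj i : (ι → ℝ) →ₗ[ℝ] ℝ).smulRight (w i))) (by
      rintro ⟨σ, j⟩ hp
      simp only [Finset.mem_filter, Finset.mem_product, Finset.mem_univ, and_true] at hp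
      refine ⟨Pi.single j 1, ?_⟩
      have := ((hB σ).1 hp.1).2.2 j hp.2
      simp [Pi.single_apply, this])
  let v : V := ∑ i, b i • w i
  have hv : ∀ σ ∈ B, ∀ i ∈ σ, c σ v i ≠ 0 := by
    intro σ hσ i hi
    have := hbg (σ, i) (by simp [hσ, hi])
    simpa [LinearMap.sum_apply, v] using this
  let T : Finset (Finset ι) := B.filter fun σ => ∀ j, j ∉ σ → ∑ i, c σ (w j) i * h i < h j
  have hT : ∀ σ, σ ∈ T ↔ σ ∈ B ∧ ∀ j, j ∉ σ → ∑ i, c σ (w j) i * h i < h j := by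
    intro σ; simp [T]
  have hTB : ∀ σ ∈ T, σ ∈ B := fun σ hσ => ((hT σ).1 hσ).1
  have hneg : ∀ σ ∈ B, (σ.filter fun i => 0 < c σ (-v) i) = σ \ (σ.filter fun i => 0 < c σ v i) := by
    intro σ hσ
    ext i
    simp only [Finset.mem_filter, Finset.mem_sdiff, map_neg, Pi.neg_apply]
    constructor
    · rintro ⟨h1, h2⟩
      exact ⟨h1, fun h3 => by linarith [h3.2]⟩
    · rintro ⟨h1, h2⟩
      refine ⟨h1, ?_⟩
      have := lt_of_le_of_ne (not_lt.1 fun h3 => h2 ⟨h1, h3⟩) (hv σ hσ i h1)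
      linarith
  have hvn : ∀ σ ∈ B, ∀ i ∈ σ, c σ (-v) i ≠ 0 := by
    intro σ hσ i hi
    simpa using hv σ hσ i hi
  have inc : ∀ σ ∈ B, ∀ y, (∀ i, 0 ≤ c σ y i) → InCone w y := fun σ hσ y hy =>
    ⟨c σ y, hy, ((hB σ).1 hσ).1 y⟩
  refine ⟨T, c, fun σ => σ.filter fun i => 0 < c σ v i, ?_, ?_, ?_, ?_, ?_⟩
  · intro σ hσ
    have hC := (hB σ).1 (hTB σ hσ)
    refine ⟨hC, ?_, Finset.filter_subset _ _⟩
    by_contra hne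
    rw [Finset.not_nonempty_iff_eq_empty, Finset.filter_eq_empty_iff] at hne
    have h1 : ht v = ∑ i, b i := by simp [v, hw]
    have h2 : ht v = ∑ i, c σ v i := by
      conv_lhs => rw [← hC.1 v]
      simp [hw]
    have h3 : 0 < ∑ i, b i := Finset.sum_pos (fun i _ => hb i) Finset.univ_nonempty
    have h4 : ∑ i, c σ v i ≤ 0 := by
      apply Finset.sum_nonpos
      intro i _
      by_cases hi : i ∈ σ
      · exact not_lt.1 (hne hi)
      · rw [hC.2.1 v i hi]
    linarith
  · rintro x ⟨a, ha, hax⟩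
    refine decomp_exists_unique w ht hw hspan c B hB hB' h hgen T hT v hv x ?_
    filter_upwards [self_mem_nhdsWithin] with ε hε
    have hε : 0 < ε := hε
    refine ⟨fun i => a i + ε * b i, fun i => ?_, ?_⟩
    · have := ha i; have := hb i; positivity
    · simp only [add_smul, Finset.sum_add_distrib, hax, mul_smul, ← Finset.smul_sum, v]
  · intro x σ hσ hx
    refine inc σ (hTB σ hσ) x fun i => ?_
    by_cases hi : i ∈ σ
    · rcases hx i hi with h1 | h1
      · exact h1.le
      · exact h1.1.ge
    · rw [((hB σ).1 (hTB σ hσ)).2.1 x i hi]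
  · rintro x ⟨a, ha, hax⟩
    have := decomp_exists_unique w ht hw hspan c B hB hB' h hgen T hT (-v) hvn x ?_
    · obtain ⟨σ, ⟨h1, h2⟩, h3⟩ := this
      refine ⟨σ, ⟨h1, ?_⟩, ?_⟩
      · rw [← hneg σ (hTB σ h1)]; exact h2
      · rintro τ ⟨h4, h5⟩
        refine h3 τ ⟨h4, ?_⟩
        rw [hneg τ (hTB τ h4)]; exact h5
    · have : ∀ᶠ ε in 𝓝[>] (0:ℝ), ∀ i, 0 ≤ a i + ε * (- b i) := eventually_all.2 fun i => by
        filter_upwards [ev_sign (a i) (- b i) (by simpa using (hb i).ne')] with ε h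
        exact h.2.2 (Or.inl (ha i))
      filter_upwards [this] with ε hε
      refine ⟨_, hε, ?_⟩
      simp only [add_smul, Finset.sum_add_distrib, hax, mul_smul, neg_smul, smul_neg,
        Finset.sum_neg_distrib, ← Finset.smul_sum, v]
  · intro x σ hσ hx
    rw [← hneg σ (hTB σ hσ)] at hx
    have hσB := hTB σ hσ
    obtain ⟨ε, h1, h2⟩ := ((ho_ev w σ (c σ) ((hB σ).1 hσB) (-v) (hvn σ hσB) x).and
      self_mem_nhdsWithin).exists
    have h2 : 0 < ε := h2
    obtain ⟨a, ha, hax⟩ := inc σ hσB _ (h1.2.2 hx)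
    refine ⟨fun i => a i + ε * b i, fun i => ?_, ?_⟩
    · have := ha i; have := hb i; positivity
    · simp only [add_smul, Finset.sum_add_distrib, hax, mul_smul, ← Finset.smul_sum]
      simp [v]

end decomp

section counting
set_option linter.unusedSectionVars false
open Polynomial

lemma card_piAnti {ι : Type*} [DecidableEq ι] (σ : Finset ι) (e N : ℕ) (h : σ.card = e + 1) :
    (Finset.piAntidiag σ N).card = (N + e).choose e := by
  have h1 : (Finset.piAntidiag σ N).card = (Finset.finsuppAntidiag σ N).card := by
    simp [Finset.finsuppAntidiag]
  rw [h1, Finset.card_finsuppAntidiag_nat_eq_choose, h,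
    show e + 1 + N - 1 = e + N by omega, ← Nat.choose_symm_add, Nat.add_comm]

lemma pre_recip (e h : ℕ) (hh : h ≤ e + 1) :
    (preHilbertPoly ℝ e (e + 1 - h)).eval 1 = (-1) ^ e * (preHilbertPoly ℝ e h).eval (-1) := by
  simp only [preHilbertPoly, eval_smul, eval_comp, eval_add, eval_sub, eval_X, eval_C, eval_one,
    smul_eq_mul]
  rw [Nat.cast_sub hh, show (-1 - (h:ℝ) + 1) = -(h:ℝ) by ring,
    ascPochhammer_eval_neg_eq_descPochhammer, descPochhammer_eval_eq_ascPochhammer]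
  have h1 : (1 - (((e + 1 : ℕ) : ℝ) - (h:ℝ)) + 1) = (h:ℝ) - e + 1 := by push_cast; ring
  rw [h1, mul_left_comm, ← mul_assoc ((-1:ℝ)^e) ((-1:ℝ)^e), ← mul_pow]
  simp

lemma pre_zero (e h m : ℕ) (h1 : m < h) (h2 : h ≤ m + e) :
    (preHilbertPoly ℝ e h).eval (m : ℝ) = 0 := by
  simp only [preHilbertPoly, eval_smul, eval_comp, eval_add, eval_sub, eval_X, eval_C, eval_one,
    smul_eq_mul]
  have : ((m:ℝ) - h + 1) = -((h - m - 1 : ℕ) : ℝ) := by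
    rw [Nat.cast_sub (by omega), Nat.cast_sub (by omega)]; push_cast; ring
  rw [this, ascPochhammer_eval_neg_coe_nat_of_lt (by omega), mul_zero]

variable {ι V : Type*} [Fintype ι] [DecidableEq ι] [NormedAddCommGroup V] [NormedSpace ℝ V]

/-- Lattice points of the half-open fundamental parallelepiped. -/
def Box (L : AddSubgroup V) (c : V →ₗ[ℝ] (ι → ℝ)) (σ A : Finset ι) : Set V :=
  {y | y ∈ L ∧ ∀ i ∈ σ, (i ∈ A → 0 ≤ c y i ∧ c y i < 1) ∧ (i ∉ A → 0 < c y i ∧ c y i ≤ 1)}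

/-- Integer parts of coordinates. -/
noncomputable def kk (c : V →ₗ[ℝ] (ι → ℝ)) (σ A : Finset ι) (x : V) (i : ι) : ℤ :=
  if i ∈ σ then (if i ∈ A then ⌊c x i⌋ else ⌈c x i⌉ - 1) else 0

lemma ht_eq {w : ι → V} {ht : V →ₗ[ℝ] ℝ} (hw : ∀ i, ht (w i) = 1) {σ : Finset ι}
    {c : V →ₗ[ℝ] (ι → ℝ)} (hC : Coor w σ c) (x : V) : ht x = ∑ i ∈ σ, c x i := by
  conv_lhs => rw [← hC.1 x]
  rw [Finset.sum_subset (Finset.subset_univ σ) (fun i _ hi => hC.2.1 x i hi)]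
  simp [hw]

lemma c_add {w : ι → V} {σ : Finset ι} {c : V →ₗ[ℝ] (ι → ℝ)} (hC : Coor w σ c) (y : V)
    (k : ι → ℤ) (hk : ∀ i, i ∉ σ → k i = 0) (i : ι) :
    c (y + ∑ i, k i • w i) i = c y i + k i := by
  have := hC.uniq (fun i => (k i : ℝ)) (by intro i hi; simp [hk i hi])
  simp only [Int.cast_smul_eq_zsmul] at this
  rw [map_add, this]
  rfl

lemma kk_add {w : ι → V} {σ : Finset ι} {c : V →ₗ[ℝ] (ι → ℝ)} (hC : Coor w σ c)
    (L : AddSubgroup V) (A : Finset ι) (y : V) (hy : y ∈ Box L c σ A)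
    (k : ι → ℤ) (hk : ∀ i, i ∉ σ → k i = 0) : kk c σ A (y + ∑ i, k i • w i) = k := by
  ext i
  unfold kk
  by_cases hi : i ∈ σ
  · rw [if_pos hi, c_add hC y k hk i]
    by_cases hA : i ∈ A
    · rw [if_pos hA]
      have := (hy.2 i hi).1 hA
      rw [Int.floor_eq_iff]
      constructor <;> linarith
    · rw [if_neg hA]
      have := (hy.2 i hi).2 hA
      rw [sub_eq_iff_eq_add, Int.ceil_eq_iff]
      push_cast
      constructor <;> linarith
  · rw [if_neg hi, hk i hi]

lemma box_part {w : ι → V} {σ : Finset ι} {c : V →ₗ[ℝ] (ι → ℝ)} (hC : Coor w σ c)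
    (L : AddSubgroup V) (hwL : ∀ i, w i ∈ L) (A : Finset ι) (x : V) (hx : x ∈ L) :
    x - ∑ i, kk c σ A x i • w i ∈ Box L c σ A := by
  refine ⟨L.sub_mem hx (L.sum_mem fun i _ => L.zsmul_mem (hwL i) _), ?_⟩
  intro i hi
  have h0 : x - ∑ i, kk c σ A x i • w i = x + ∑ i, (fun i => - kk c σ A x i) i • w i := by
    simp [sub_eq_add_neg]
  rw [h0, c_add hC _ _ (by intro i hi; simp [kk, hi])]
  constructor
  · intro hA
    simp only [kk, if_pos hi, if_pos hA, Int.cast_neg]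
    have h1 := Int.floor_le (c x i)
    have h2 := Int.lt_floor_add_one (c x i)
    constructor <;> linarith
  · intro hA
    simp only [kk, if_pos hi, if_neg hA, Int.cast_neg, Int.cast_sub, Int.cast_one]
    have h1 := Int.le_ceil (c x i)
    have h2 := Int.ceil_lt_add_one (c x i)
    constructor <;> linarith

lemma kk_nonneg {σ : Finset ι} {c : V →ₗ[ℝ] (ι → ℝ)} (A : Finset ι) (x : V)
    (hx : HO c σ A x) (i : ι) : 0 ≤ kk c σ A x i := by
  unfold kk
  split_ifs with hi hA
  · rw [Int.floor_nonneg]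
    rcases hx i hi with h | h
    · exact h.le
    · exact h.1.ge
  · rcases hx i hi with h | h
    · have := Int.ceil_pos.2 h
      omega
    · exact absurd h.2 hA
  · rfl

lemma box_HO {σ : Finset ι} {c : V →ₗ[ℝ] (ι → ℝ)} {L : AddSubgroup V} {A : Finset ι} {y : V}
    (hy : y ∈ Box L c σ A) : HO c σ A y := by
  intro i hi
  by_cases hA : i ∈ A
  · rcases ((hy.2 i hi).1 hA).1.lt_or_eq with h | h
    · exact Or.inl h
    · exact Or.inr ⟨h.symm, hA⟩
  · exact Or.inl ((hy.2 i hi).2 hA).1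

/-- Heights of box points. -/
lemma box_ht {w : ι → V} {ht : V →ₗ[ℝ] ℝ} (hw : ∀ i, ht (w i) = 1) {σ : Finset ι}
    {c : V →ₗ[ℝ] (ι → ℝ)} (hC : Coor w σ c)
    (L : AddSubgroup V) (hL : ∀ x ∈ L, ∃ z : ℤ, ht x = z) (A : Finset ι)
    (y : V) (hy : y ∈ Box L c σ A) :
    ht y = (⌊ht y⌋₊ : ℝ) ∧ ⌊ht y⌋₊ ≤ σ.card ∧ ((A ∩ σ).Nonempty → ⌊ht y⌋₊ < σ.card) := by
  have h0 : 0 ≤ ht y := by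
    rw [ht_eq hw hC]
    refine Finset.sum_nonneg fun i hi => ?_
    rcases box_HO hy i hi with h | h
    · exact h.le
    · exact h.1.ge
  have hle : ∀ i ∈ σ, c y i ≤ 1 := by
    intro i hi
    by_cases hA : i ∈ A
    · exact ((hy.2 i hi).1 hA).2.le
    · exact ((hy.2 i hi).2 hA).2
  have h1 : ht y ≤ σ.card := by
    rw [ht_eq hw hC]
    calc _ ≤ ∑ i ∈ σ, (1:ℝ) := Finset.sum_le_sum hle
      _ = _ := by simp
  have h2 : (A ∩ σ).Nonempty → ht y < σ.card := by
    rintro ⟨i, hi⟩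
    rw [Finset.mem_inter] at hi
    rw [ht_eq hw hC]
    calc _ < ∑ i ∈ σ, (1:ℝ) :=
          Finset.sum_lt_sum hle ⟨i, hi.2, ((hy.2 i hi.2).1 hi.1).2⟩
      _ = _ := by simp
  obtain ⟨z, hz⟩ := hL y hy.1
  have hz0 : 0 ≤ z := by rw [hz] at h0; exact_mod_cast h0
  obtain ⟨k, rfl⟩ := Int.eq_ofNat_of_zero_le hz0
  have hz' : ht y = (k : ℝ) := by rw [hz]; simp
  rw [hz'] at h1 h2 ⊢
  rw [Nat.floor_natCast]
  exact ⟨rfl, by exact_mod_cast h1, fun h => by exact_mod_cast h2 h⟩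

lemma box_finite {w : ι → V} {ht : V →ₗ[ℝ] ℝ} (hw : ∀ i, ht (w i) = 1) {σ : Finset ι}
    {c : V →ₗ[ℝ] (ι → ℝ)} (hC : Coor w σ c)
    (L : AddSubgroup V) (hL : ∀ x ∈ L, ∃ z : ℤ, ht x = z)
    (hfin : ∀ m : ℕ, {x | x ∈ L ∧ ht x = m ∧ InCone w x}.Finite) (A : Finset ι) :
    (Box L c σ A).Finite := by
  have : (⋃ m ∈ Finset.range (σ.card + 1), {x | x ∈ L ∧ ht x = (m : ℕ) ∧ InCone w x}).Finite :=
    Set.Finite.biUnion (Finset.finite_toSet _) fun m _ => hfin m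
  refine this.subset ?_
  intro y hy
  obtain ⟨h1, h2, -⟩ := box_ht hw hC L hL A y hy
  rw [Set.mem_iUnion₂]
  refine ⟨⌊ht y⌋₊, by simpa [Nat.lt_succ_iff] using h2, hy.1, h1, c y, ?_, hC.1 y⟩
  intro i
  by_cases hi : i ∈ σ
  · rcases box_HO hy i hi with h | h
    · exact h.le
    · exact h.1.ge
  · rw [hC.2.1 y i hi]

lemma simplex_count {w : ι → V} {ht : V →ₗ[ℝ] ℝ} (hw : ∀ i, ht (w i) = 1) {σ : Finset ι}
    {c : V →ₗ[ℝ] (ι → ℝ)} (hC : Coor w σ c) (e : ℕ) (he : σ.card = e + 1)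
    (L : AddSubgroup V) (hwL : ∀ i, w i ∈ L) (hL : ∀ x ∈ L, ∃ z : ℤ, ht x = z) (A : Finset ι)
    (Y : Finset V) (hY : ∀ y, y ∈ Y ↔ y ∈ Box L c σ A) (m : ℕ)
    (F : Finset V) (hF : ∀ x, x ∈ F ↔ x ∈ L ∧ ht x = m ∧ HO c σ A x)
    (hm : 1 ≤ m ∨ (A ∩ σ).Nonempty) :
    (F.card : ℝ) = ∑ y ∈ Y, (preHilbertPoly ℝ e ⌊ht y⌋₊).eval (m : ℝ) := by
  classical
  rw [Finset.card_eq_sum_card_fiberwise (f := fun x => x - ∑ i, kk c σ A x i • w i) (t := Y)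
    (by
      intro x hx
      exact (hY _).2 (box_part hC L hwL A x ((hF x).1 hx).1)), Nat.cast_sum]
  refine Finset.sum_congr rfl fun y hyY => ?_
  have hy := (hY y).1 hyY
  obtain ⟨h1, h2, h3⟩ := box_ht hw hC L hL A y hy
  set H := ⌊ht y⌋₊ with hH
  -- height of a translate
  have htr : ∀ k : ι → ℤ, (∀ i, i ∉ σ → k i = 0) →
      ht (y + ∑ i, k i • w i) = H + ∑ i ∈ σ, (k i : ℝ) := by
    intro k hk
    rw [map_add, ← h1]
    congr 1
    rw [Finset.sum_subset (Finset.subset_univ σ) (fun i _ hi => by simp [hk i hi])]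
    simp [hw]
  by_cases hle : H ≤ m
  · rw [preHilbertPoly_eq_choose_sub_add ℝ e hle, ← card_piAnti σ e (m - H) he]
    congr 1
    refine Finset.card_nbij' (fun x i => (kk c σ A x i).toNat)
      (fun k => y + ∑ i, (k i : ℤ) • w i) ?_ ?_ ?_ ?_
    · intro x hx
      rw [Finset.mem_coe, Finset.mem_filter] at hx
      obtain ⟨hxF, hxy⟩ := hx
      obtain ⟨g1, g2, g3⟩ := (hF x).1 hxF
      rw [Finset.mem_coe, Finset.mem_piAntidiag]
      refine ⟨?_, fun i hi => by by_contra hn; exact hi (by simp [kk, hn])⟩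
      have hx' : x = y + ∑ i, kk c σ A x i • w i := by rw [← hxy]; simp
      have := htr (kk c σ A x) (by intro i hi; simp [kk, hi])
      rw [← hx', g2] at this
      have e1 : ∀ i, (kk c σ A x i : ℝ) = ((kk c σ A x i).toNat : ℝ) := by
        intro i
        have := Int.toNat_of_nonneg (kk_nonneg A x g3 i)
        exact_mod_cast this.symm
      simp only [e1] at this
      have h4 : m = H + ∑ i ∈ σ, (kk c σ A x i).toNat := by exact_mod_cast this
      show ∑ i ∈ σ, (kk c σ A x i).toNat = m - H
      omega
    · intro k hk
      rw [Finset.mem_coe, Finset.mem_piAntidiag] at hk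
      have hk' : ∀ i, i ∉ σ → (fun i => (k i : ℤ)) i = 0 := by
        intro i hi
        by_contra hn
        exact hi (hk.2 i (by simpa using hn))
      rw [Finset.mem_coe, Finset.mem_filter, hF]
      refine ⟨⟨L.add_mem hy.1 (L.sum_mem fun i _ => L.zsmul_mem (hwL i) _), ?_, ?_⟩, ?_⟩
      · have := htr _ hk'
        rw [this]
        have h5 : H + ∑ i ∈ σ, k i = m := by rw [hk.1]; omega
        rw [← h5]; simp
      · intro i hi
        rw [c_add hC y _ hk' i]
        have h6 : (0:ℝ) ≤ ((k i : ℤ) : ℝ) := by simp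
        rcases box_HO hy i hi with h | h
        · left; linarith
        · rcases h6.lt_or_eq with h7 | h7
          · left; linarith [h.1]
          · right; exact ⟨by linarith [h.1], h.2⟩
      · rw [kk_add hC L A y hy _ hk']
        simp
    · intro x hx
      rw [Finset.mem_coe, Finset.mem_filter] at hx
      obtain ⟨hxF, hxy⟩ := hx
      obtain ⟨g1, g2, g3⟩ := (hF x).1 hxF
      have e1 : ∀ i, (((kk c σ A x i).toNat : ℕ) : ℤ) = kk c σ A x i := fun i =>
        Int.toNat_of_nonneg (kk_nonneg A x g3 i)
      simp only [e1]
      rw [← hxy]; simp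
    · intro k hk
      rw [Finset.mem_coe, Finset.mem_piAntidiag] at hk
      have hk' : ∀ i, i ∉ σ → (fun i => (k i : ℤ)) i = 0 := by
        intro i hi
        by_contra hn
        exact hi (hk.2 i (by simpa using hn))
      simp only [kk_add hC L A y hy _ hk']
      ext i; simp
  · push Not at hle
    rw [pre_zero e H m hle (by
      rcases hm with hm | hm
      · omega
      · have := h3 hm; omega)]
    rw [Nat.cast_eq_zero, Finset.card_eq_zero, Finset.filter_eq_empty_iff]
    intro x hxF hxy
    obtain ⟨g1, g2, g3⟩ := (hF x).1 hxF
    have hx' : x = y + ∑ i, kk c σ A x i • w i := by rw [← hxy]; simp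
    have := htr (kk c σ A x) (by intro i hi; simp [kk, hi])
    rw [← hx', g2] at this
    have h5 : (0:ℝ) ≤ ∑ i ∈ σ, (kk c σ A x i : ℝ) :=
      Finset.sum_nonneg fun i _ => by exact_mod_cast kk_nonneg A x g3 i
    have : (H : ℝ) ≤ m := by linarith
    have : H ≤ m := by exact_mod_cast this
    omega

lemma simplex_recip {w : ι → V} {ht : V →ₗ[ℝ] ℝ} (hw : ∀ i, ht (w i) = 1) {σ : Finset ι}
    {c : V →ₗ[ℝ] (ι → ℝ)} (hC : Coor w σ c) (e : ℕ) (he : σ.card = e + 1)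
    (L : AddSubgroup V) (hwL : ∀ i, w i ∈ L) (hL : ∀ x ∈ L, ∃ z : ℤ, ht x = z) (A : Finset ι)
    (Y Z : Finset V) (hY : ∀ y, y ∈ Y ↔ y ∈ Box L c σ A)
    (hZ : ∀ y, y ∈ Z ↔ y ∈ Box L c σ (σ \ A)) :
    ∑ y ∈ Z, (preHilbertPoly ℝ e ⌊ht y⌋₊).eval 1 =
      (-1) ^ e * ∑ y ∈ Y, (preHilbertPoly ℝ e ⌊ht y⌋₊).eval (-1) := by
  classical
  have hcs : ∀ i ∈ σ, c (∑ i ∈ σ, w i) i = 1 := by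
    intro i hi
    have := hC.uniq (fun i => if i ∈ σ then 1 else 0) (by intro i hi; simp [hi])
    simp only [ite_smul, one_smul, zero_smul, Finset.sum_ite_mem, Finset.univ_inter] at this
    rw [this]; simp [hi]
  have hsL : ∑ i ∈ σ, w i ∈ L := L.sum_mem fun i _ => hwL i
  have hts : ht (∑ i ∈ σ, w i) = (e + 1 : ℕ) := by simp [hw, he]
  rw [Finset.mul_sum]
  refine Finset.sum_nbij' (fun y => ∑ i ∈ σ, w i - y) (fun y => ∑ i ∈ σ, w i - y) ?_ ?_ ?_ ?_ ?_
  · intro y hy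
    rw [hY]
    obtain ⟨h1, h2⟩ := (hZ y).1 hy
    refine ⟨L.sub_mem hsL h1, fun i hi => ?_⟩
    have := h2 i hi
    simp only [Finset.mem_sdiff, hi, true_and, not_not] at this
    simp only [map_sub, Pi.sub_apply, hcs i hi]
    constructor
    · intro h
      have := this.2 h
      constructor <;> linarith
    · intro h
      have := this.1 h
      constructor <;> linarith
  · intro y hy
    rw [hZ]
    obtain ⟨h1, h2⟩ := (hY y).1 hy
    refine ⟨L.sub_mem hsL h1, fun i hi => ?_⟩
    have := h2 i hi
    simp only [Finset.mem_sdiff, hi, true_and, not_not]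
    simp only [map_sub, Pi.sub_apply, hcs i hi]
    constructor
    · intro h
      have := this.2 h
      constructor <;> linarith
    · intro h
      have := this.1 h
      constructor <;> linarith
  · intro y _; simp
  · intro y _; simp
  · intro y hy
    obtain ⟨h1, h2, -⟩ := box_ht hw hC L hL (σ \ A) y ((hZ y).1 hy)
    rw [he] at h2
    have h3 : ht (∑ i ∈ σ, w i - y) = ((e + 1 - ⌊ht y⌋₊ : ℕ) : ℝ) := by
      rw [map_sub, hts, Nat.cast_sub h2, ← h1]
    rw [h3, Nat.floor_natCast, ← pre_recip e _ (by omega)]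
    congr 2
    omega

end counting

section core
open Polynomial

lemma card_split {V κ : Type*} (T : Finset κ) (S : Finset V) (P : κ → V → Prop)
    [∀ σ, DecidablePred (P σ)]
    (h : ∀ x ∈ S, ∃! σ, σ ∈ T ∧ P σ x) : S.card = ∑ σ ∈ T, (S.filter (P σ)).card := by
  classical
  simp only [Finset.card_filter]
  rw [Finset.sum_comm, Finset.card_eq_sum_ones]
  refine Finset.sum_congr rfl fun x hx => ?_
  obtain ⟨σ, ⟨h1, h2⟩, h3⟩ := h x hx
  rw [Finset.sum_eq_single σ]
  · simp [h2]
  · intro τ hτ hne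
    rw [if_neg]
    intro h4
    exact hne (h3 τ ⟨hτ, h4⟩)
  · intro h4; exact absurd h1 h4

variable {ι V : Type*} [Fintype ι] [DecidableEq ι] [NormedAddCommGroup V] [NormedSpace ℝ V]

theorem ehrhart_core [Nonempty ι] (w : ι → V) (ht : V →ₗ[ℝ] ℝ) (hw : ∀ i, ht (w i) = 1)
    (hspan : ⊤ ≤ Submodule.span ℝ (Set.range w)) (e : ℕ) (he : finrank ℝ V = e + 1)
    (L : AddSubgroup V) (hwL : ∀ i, w i ∈ L) (hL : ∀ x ∈ L, ∃ z : ℤ, ht x = z)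
    (hfin : ∀ m : ℕ, {x | x ∈ L ∧ ht x = m ∧ InCone w x}.Finite) :
    ∃ p : ℝ[X],
      (∀ m : ℕ, p.eval (m : ℝ) = Nat.card {x | x ∈ L ∧ ht x = m ∧ InCone w x}) ∧
      p.eval (-1) = (-1) ^ e * Nat.card {x | x ∈ L ∧ ht x = 1 ∧ InPos w x} := by
  classical
  obtain ⟨T, c, A, h0, h1, h2, h3, h4⟩ := exists_decomp w ht hw hspan
  have hcard : ∀ σ ∈ T, σ.card = e + 1 := fun σ hσ => by rw [(h0 σ hσ).1.card, he]
  have hbf : ∀ σ ∈ T, ∀ A, (Box L (c σ) σ A).Finite := fun σ hσ A =>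
    box_finite hw (h0 σ hσ).1 L hL hfin A
  let Y : Finset ι → Finset ι → Finset V := fun σ A =>
    if hh : (Box L (c σ) σ A).Finite then hh.toFinset else ∅
  have hY : ∀ σ ∈ T, ∀ A, ∀ y, y ∈ Y σ A ↔ y ∈ Box L (c σ) σ A := by
    intro σ hσ A y
    simp [Y, hbf σ hσ A]
  refine ⟨∑ σ ∈ T, ∑ y ∈ Y σ (A σ), preHilbertPoly ℝ e ⌊ht y⌋₊, ?_, ?_⟩
  · intro m
    rw [Nat.card_eq_card_finite_toFinset (hfin m), card_split T _ (fun σ x => HO (c σ) σ (A σ) x)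
      (by intro x hx; simp at hx; exact h1 x hx.2.2), Nat.cast_sum, eval_finsetSum]
    refine Finset.sum_congr rfl fun σ hσ => ?_
    obtain ⟨g1, g2, g3⟩ := h0 σ hσ
    rw [eval_finsetSum]
    symm
    apply simplex_count hw g1 e (hcard σ hσ) L hwL hL (A σ) _ (hY σ hσ (A σ)) m
    · intro x
      simp only [Finset.mem_filter, Set.Finite.mem_toFinset, Set.mem_ofPred_eq]
      constructor
      · rintro ⟨⟨a, b, _⟩, d⟩; exact ⟨a, b, d⟩
      · rintro ⟨a, b, d⟩; exact ⟨⟨a, b, h2 x σ hσ d⟩, d⟩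
    · right
      rwa [Finset.inter_eq_left.2 g3]
  · have hfin' : {x | x ∈ L ∧ ht x = 1 ∧ InPos w x}.Finite := by
      refine (hfin 1).subset ?_
      rintro x ⟨a, b, ⟨d, hd, hd'⟩⟩
      exact ⟨a, by simpa using b, d, fun i => (hd i).le, hd'⟩
    rw [Nat.card_eq_card_finite_toFinset hfin', card_split T _
      (fun σ x => HO (c σ) σ (σ \ A σ) x)
      (by intro x hx; simp at hx; exact h3 x hx.2.2), Nat.cast_sum, eval_finsetSum, Finset.mul_sum]
    refine Finset.sum_congr rfl fun σ hσ => ?_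
    obtain ⟨g1, g2, g3⟩ := h0 σ hσ
    rw [eval_finsetSum]
    have r1 := simplex_recip hw g1 e (hcard σ hσ) L hwL hL (A σ) _ _ (hY σ hσ (A σ))
      (hY σ hσ (σ \ A σ))
    have r2 := simplex_count hw g1 e (hcard σ hσ) L hwL hL (σ \ A σ) _ (hY σ hσ (σ \ A σ)) 1
      (hfin'.toFinset.filter fun x => HO (c σ) σ (σ \ A σ) x) (by
        intro x
        simp only [Finset.mem_filter, Set.Finite.mem_toFinset, Set.mem_ofPred_eq, Nat.cast_one]
        constructor
        · rintro ⟨⟨a, b, _⟩, d⟩; exact ⟨a, b, d⟩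
        · rintro ⟨a, b, d⟩; exact ⟨⟨a, b, h4 x σ hσ d⟩, d⟩) (Or.inl le_rfl)
    rw [Nat.cast_one, r1] at r2
    rw [r2, ← mul_assoc, ← mul_pow]
    simp

end core

section geom
set_option linter.unusedSectionVars false
variable {ι E : Type*} [Fintype ι] [NormedAddCommGroup E] [NormedSpace ℝ E]

lemma mem_hull_range (v : ι → E) (x : E) : x ∈ convexHull ℝ (Set.range v) ↔
    ∃ a : ι → ℝ, (∀ i, 0 ≤ a i) ∧ ∑ i, a i = 1 ∧ ∑ i, a i • v i = x := by
  constructor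
  · intro hx
    have hsub : convexHull ℝ (Set.range v) ⊆
        {x | ∃ a : ι → ℝ, (∀ i, 0 ≤ a i) ∧ ∑ i, a i = 1 ∧ ∑ i, a i • v i = x} := by
      classical
      refine convexHull_min ?_ ?_
      · rintro _ ⟨j, rfl⟩
        refine ⟨Pi.single j 1, fun i => ?_, by simp, by simp [Pi.single_apply]⟩
        by_cases h : i = j
        · subst h; simp
        · simp [h]
      · rintro x ⟨a, ha, ha1, rfl⟩ y ⟨b, hb, hb1, rfl⟩ r t hr ht hrt
        refine ⟨fun i => r * a i + t * b i, fun i => ?_, ?_, ?_⟩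
        · have := ha i; have := hb i; positivity
        · simp [Finset.sum_add_distrib, ← Finset.mul_sum, ha1, hb1, hrt]
        · simp [add_smul, Finset.sum_add_distrib, mul_smul, ← Finset.smul_sum]
    exact hsub hx
  · rintro ⟨a, ha, ha1, rfl⟩
    exact (convex_convexHull ℝ _).sum_mem (fun i _ => ha i) ha1
      fun i _ => subset_convexHull ℝ _ ⟨i, rfl⟩

lemma mem_relint_iff (D : Set E) (x : E) : x ∈ intrinsicInterior ℝ D ↔
    x ∈ affineSpan ℝ D ∧ ∃ r > 0, ∀ y ∈ affineSpan ℝ D, ‖y - x‖ < r → y ∈ D := by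
  rw [mem_intrinsicInterior]
  constructor
  · rintro ⟨y, hy, rfl⟩
    refine ⟨y.2, ?_⟩
    rw [mem_interior_iff_mem_nhds, Metric.mem_nhds_iff] at hy
    obtain ⟨r, hr, hb⟩ := hy
    refine ⟨r, hr, fun z hz hzr => ?_⟩
    have : (⟨z, hz⟩ : affineSpan ℝ D) ∈ Metric.ball y r := by
      rw [Metric.mem_ball, Subtype.dist_eq, dist_eq_norm]; exact hzr
    exact hb this
  · rintro ⟨hx, r, hr, h⟩
    refine ⟨⟨x, hx⟩, ?_, rfl⟩
    rw [mem_interior_iff_mem_nhds, Metric.mem_nhds_iff]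
    refine ⟨r, hr, fun z hz => ?_⟩
    rw [Metric.mem_ball, Subtype.dist_eq, dist_eq_norm] at hz
    exact h z z.2 hz

open Filter Topology in
lemma mem_relint_hull [FiniteDimensional ℝ E] [Nonempty ι] (v : ι → E) (x : E) :
    x ∈ intrinsicInterior ℝ (convexHull ℝ (Set.range v)) ↔
    ∃ a : ι → ℝ, (∀ i, 0 < a i) ∧ ∑ i, a i = 1 ∧ ∑ i, a i • v i = x := by
  have hpos : (0:ℝ) < Fintype.card ι := by exact_mod_cast Fintype.card_pos
  constructor
  · intro hx
    have hxD := intrinsicInterior_subset hx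
    rw [mem_relint_iff] at hx
    obtain ⟨hxs, r, hr, h⟩ := hx
    let g : E := ∑ i, ((Fintype.card ι : ℝ)⁻¹) • v i
    have hg : g ∈ convexHull ℝ (Set.range v) :=
      (mem_hull_range v g).2 ⟨fun _ => (Fintype.card ι : ℝ)⁻¹, fun i => by positivity,
        by simp [hpos.ne'], rfl⟩
    have hgs := subset_affineSpan ℝ _ hg
    have ev : ∀ᶠ ε in 𝓝[>] (0:ℝ), ‖ε • (x - g)‖ < r := by
      have : Tendsto (fun ε : ℝ => ‖ε • (x - g)‖) (𝓝 0) (𝓝 0) := by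
        have hc : Continuous (fun ε : ℝ => ‖ε • (x - g)‖) := by fun_prop
        simpa using hc.tendsto 0
      exact (this.eventually (gt_mem_nhds hr)).filter_mono nhdsWithin_le_nhds
    obtain ⟨ε, h1, h2⟩ := (ev.and eventually_mem_nhdsWithin).exists
    have h2 : 0 < ε := h2
    have hy : ε • (x - g) + x ∈ affineSpan ℝ (convexHull ℝ (Set.range v)) := by
      have := AffineMap.lineMap_mem (-ε) hxs hgs
      rw [AffineMap.lineMap_apply] at this
      convert this using 1
      simp only [vsub_eq_sub, vadd_eq_add, neg_smul, smul_sub]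
      abel
    have hyD := h _ hy (by simpa using h1)
    obtain ⟨a, ha, ha1, hax⟩ := (mem_hull_range v _).1 hyD
    refine ⟨fun i => (1 + ε)⁻¹ * (a i + ε * (Fintype.card ι : ℝ)⁻¹), fun i => ?_, ?_, ?_⟩
    · have := ha i; positivity
    · rw [← Finset.mul_sum, Finset.sum_add_distrib, ha1]
      simp only [Finset.sum_const, Finset.card_univ, nsmul_eq_mul]
      field_simp
    · simp only [mul_smul, add_smul, ← Finset.smul_sum, Finset.sum_add_distrib, hax]
      rw [Finset.smul_sum]
      change (1 + ε)⁻¹ • (ε • (x - g) + x + ε • g) = x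
      rw [inv_smul_eq_iff₀ (by positivity), smul_sub, add_smul, one_smul]
      abel
  · rintro ⟨a, ha, ha1, hax⟩
    have hconv := convex_convexHull ℝ (Set.range v)
    have hne : (convexHull ℝ (Set.range v)).Nonempty := (Set.range_nonempty v).convexHull
    obtain ⟨z, hz⟩ := hne.intrinsicInterior hconv
    obtain ⟨b, hb, hb1, hbz⟩ := (mem_hull_range v z).1 (intrinsicInterior_subset hz)
    rw [mem_relint_iff] at hz
    obtain ⟨hzs, r, hr, h⟩ := hz
    have ev : ∀ᶠ ε in 𝓝[>] (0:ℝ), ∀ i, 0 ≤ a i + ε * (a i - b i) := by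
      refine eventually_all.2 fun i => ?_
      by_cases h0 : a i - b i = 0
      · simp [h0, (ha i).le]
      · filter_upwards [ev_sign (a i) (a i - b i) h0] with ε h
        exact h.2.2 (Or.inl (ha i))
    obtain ⟨ε, h1, h2⟩ := (ev.and eventually_mem_nhdsWithin).exists
    have h2 : 0 < ε := h2
    let y : E := x + ε • (x - z)
    have hy : y ∈ convexHull ℝ (Set.range v) := by
      refine (mem_hull_range v y).2 ⟨_, h1, ?_, ?_⟩
      · simp [Finset.sum_add_distrib, ← Finset.mul_sum, ha1, hb1]
      · simp only [add_smul, mul_smul, sub_smul, Finset.sum_add_distrib, ← Finset.smul_sum,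
          Finset.sum_sub_distrib, hax, hbz, y]
    have hys := subset_affineSpan ℝ _ hy
    have hxD : x ∈ convexHull ℝ (Set.range v) :=
      (mem_hull_range v x).2 ⟨a, fun i => (ha i).le, ha1, hax⟩
    rw [mem_relint_iff]
    refine ⟨subset_affineSpan ℝ _ hxD, r * (ε / (1 + ε)), by positivity, fun p hp hpr => ?_⟩
    -- p = (ε q + y) / (1 + ε)
    let q : E := p + ε⁻¹ • (p - y)
    have hq : q ∈ affineSpan ℝ (convexHull ℝ (Set.range v)) := by
      have := AffineMap.lineMap_mem (-ε⁻¹) hp hys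
      rw [AffineMap.lineMap_apply] at this
      convert this using 1
      simp only [vsub_eq_sub, vadd_eq_add, neg_smul, smul_sub, q]
      abel
    have hqz : q - z = (1 + ε⁻¹) • (p - x) := by
      simp only [q, y]
      have : ε⁻¹ • (p - (x + ε • (x - z))) = ε⁻¹ • (p - x) - (x - z) := by
        rw [← sub_sub, smul_sub ε⁻¹ (p - x), inv_smul_smul₀ h2.ne']
      rw [this, add_smul, one_smul]
      abel
    have hqD : q ∈ convexHull ℝ (Set.range v) := by
      refine h q hq ?_
      rw [hqz, norm_smul, Real.norm_of_nonneg (by positivity)]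
      calc (1 + ε⁻¹) * ‖p - x‖ < (1 + ε⁻¹) * (r * (ε / (1 + ε))) :=
            mul_lt_mul_of_pos_left hpr (by positivity)
        _ = r := by field_simp; ring
    have hp' : p = (ε / (1 + ε)) • q + (1 / (1 + ε)) • y := by
      have e1 : (1 + ε) • p = ε • q + y := by
        simp only [q, smul_add, smul_inv_smul₀ h2.ne', add_smul, one_smul]
        abel
      rw [div_eq_inv_mul, mul_smul, one_div, ← smul_add, ← e1, inv_smul_smul₀ (by positivity)]
    rw [hp']
    exact hconv hqD hy (by positivity) (by positivity) (by field_simp; ring)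

lemma finrank_span_lift [FiniteDimensional ℝ E] [Nonempty ι] (v : ι → E) :
    finrank ℝ (Submodule.span ℝ (Set.range fun i => ((v i, 1) : E × ℝ))) =
      finrank ℝ (vectorSpan ℝ (convexHull ℝ (Set.range v))) + 1 := by
  classical
  obtain ⟨j⟩ := ‹Nonempty ι›
  set W := Submodule.span ℝ (Set.range fun i => ((v i, 1) : E × ℝ)) with hW
  have hvs : vectorSpan ℝ (convexHull ℝ (Set.range v)) = vectorSpan ℝ (Set.range v) := by
    rw [← direction_affineSpan, affineSpan_convexHull, direction_affineSpan]
  rw [hvs]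
  let f : W →ₗ[ℝ] ℝ := LinearMap.snd ℝ E ℝ ∘ₗ W.subtype
  have hmem : ∀ i, ((v i, 1) : E × ℝ) ∈ W := fun i => Submodule.subset_span ⟨i, rfl⟩
  have hsurj : LinearMap.range f = ⊤ := by
    rw [LinearMap.range_eq_top]
    intro t
    refine ⟨t • ⟨(v j, 1), hmem j⟩, ?_⟩
    simp [f]
  have hrn := LinearMap.finrank_range_add_finrank_ker f
  rw [hsurj, finrank_top, finrank_self] at hrn
  have hker : finrank ℝ (LinearMap.ker f) = finrank ℝ (vectorSpan ℝ (Set.range v)) := by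
    have e1 : (LinearMap.ker f).map W.subtype =
        (vectorSpan ℝ (Set.range v)).map (LinearMap.inl ℝ E ℝ) := by
      apply le_antisymm
      · rintro _ ⟨⟨x, hx⟩, hx0, rfl⟩
        have hx0 : x.2 = 0 := hx0
        have hall : ∀ y ∈ W, y.1 - y.2 • v j ∈ vectorSpan ℝ (Set.range v) := by
          intro y hy
          induction hy using Submodule.span_induction with
          | mem y hy =>
            obtain ⟨i, rfl⟩ := hy
            simpa using vsub_mem_vectorSpan ℝ (Set.mem_range_self (f := v) i)
              (Set.mem_range_self (f := v) j)
          | zero => simp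
          | add y z _ _ h1 h2 =>
            have := Submodule.add_mem _ h1 h2
            convert this using 1
            simp only [Prod.fst_add, Prod.snd_add, add_smul]
            abel
          | smul r y _ h1 =>
            have := Submodule.smul_mem _ r h1
            convert this using 1
            simp [smul_sub, mul_smul]
        refine ⟨x.1, by simpa [hx0] using hall x hx, ?_⟩
        ext <;> simp [hx0]
      · rw [vectorSpan_range_eq_span_range_vsub_right ℝ v j, Submodule.map_span, Submodule.span_le]
        rintro _ ⟨_, ⟨i, rfl⟩, rfl⟩
        refine ⟨⟨(v i, 1) - (v j, 1), W.sub_mem (hmem i) (hmem j)⟩, ?_, ?_⟩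
        · simp [f]
        · simp
    rw [← Submodule.finrank_map_subtype_eq, e1]
    exact (Submodule.equivMapOfInjective _ LinearMap.inl_injective _).finrank_eq.symm
  omega

end geom

lemma card_transfer {n : ℕ} {W : Submodule ℝ ((Fin n → ℝ) × ℝ)} (t : ℝ)
    (P : Set (Fin n → ℤ)) (Q : Set W)
    (h1 : ∀ z, z ∈ P → ∃ x : W, x.1 = (fun i => (z i : ℝ), t) ∧ x ∈ Q)
    (h2 : ∀ x ∈ Q, ∃ z ∈ P, x.1 = (fun i => (z i : ℝ), t)) :
    Nat.card P = Nat.card Q := by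
  choose! f hf using h1
  refine Nat.card_eq_of_bijective (fun z : P => (⟨f z.1, (hf z.1 z.2).2⟩ : Q)) ⟨?_, ?_⟩
  · intro a b hab
    have hab : f a.1 = f b.1 := congrArg Subtype.val hab
    have e1 := (hf a.1 a.2).1
    rw [hab, (hf b.1 b.2).1] at e1
    apply Subtype.ext
    ext i
    have := congrFun (congrArg Prod.fst e1) i
    simp only at this
    exact_mod_cast this.symm
  · rintro ⟨x, hx⟩
    obtain ⟨z, hz, hxz⟩ := h2 x hx
    refine ⟨⟨z, hz⟩, ?_⟩
    apply Subtype.ext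
    apply Subtype.ext
    simp only
    rw [(hf z hz).1, hxz]

/-- **Ehrhart reciprocity.** For an integral convex polytope `Δ ⊆ ℝⁿ` (the
convex hull of a nonempty finite set of lattice points), the lattice-point counting
function `E(m) = #(mΔ ∩ ℤⁿ)` for `m ≥ 0` extends to a polynomial in `m`, and its value at
`m = −1` equals `(−1)^{dim Δ}` times the number of lattice points in the relative interior
of `Δ`. -/
theorem stmt12 {n : ℕ} (s : Finset (Fin n → ℤ)) (hs : s.Nonempty)
    (Δ : Set (Fin n → ℝ)) (hΔ : Δ = convexHull ℝ ↑(s.image fun v i => (v i : ℝ))) :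
    ∃ p : Polynomial ℝ,
      (∀ m : ℕ, p.eval (m : ℝ) =
        Nat.card {x : Fin n → ℤ | (fun i => (x i : ℝ)) ∈ (m : ℝ) • Δ}) ∧
      p.eval (-1) = (-1 : ℝ) ^ (finrank ℝ ↥(vectorSpan ℝ Δ)) *
        Nat.card {x : Fin n → ℤ | (fun i => (x i : ℝ)) ∈ intrinsicInterior ℝ Δ} := by
  classical
  let v : s → (Fin n → ℝ) := fun i k => (i.1 k : ℝ)
  haveI : Nonempty s := hs.to_subtype
  have hΔ' : Δ = convexHull ℝ (Set.range v) := by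
    rw [hΔ]
    congr 1
    ext x
    simp [v]
  let W : Submodule ℝ ((Fin n → ℝ) × ℝ) :=
    Submodule.span ℝ (Set.range fun i => ((v i, 1) : (Fin n → ℝ) × ℝ))
  have hmem : ∀ i, ((v i, 1) : (Fin n → ℝ) × ℝ) ∈ W := fun i => Submodule.subset_span ⟨i, rfl⟩
  let w : s → W := fun i => ⟨(v i, 1), hmem i⟩
  let ht : W →ₗ[ℝ] ℝ := LinearMap.snd ℝ _ ℝ ∘ₗ W.subtype
  have hw : ∀ i, ht (w i) = 1 := fun i => rfl
  have hspan : ⊤ ≤ Submodule.span ℝ (Set.range w) := by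
    rintro ⟨x, hx⟩ -
    have h1 : (Submodule.span ℝ (Set.range w)).map W.subtype = W := by
      rw [Submodule.map_span, ← Set.range_comp]
      rfl
    have hx' := hx
    rw [← h1] at hx'
    obtain ⟨y, hy, hyx⟩ := hx'
    have : y = ⟨x, hx⟩ := Subtype.ext hyx
    rwa [← this]
  let L : AddSubgroup W :=
    { carrier := {x | ∃ (z : Fin n → ℤ) (t : ℤ), x.1 = (fun i => (z i : ℝ), (t : ℝ))}
      zero_mem' := ⟨0, 0, by ext <;> simp⟩
      add_mem' := by
        rintro x y ⟨z, t, h⟩ ⟨z', t', h'⟩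
        refine ⟨z + z', t + t', ?_⟩
        rw [Submodule.coe_add, h, h']
        ext <;> simp
      neg_mem' := by
        rintro x ⟨z, t, h⟩
        refine ⟨-z, -t, ?_⟩
        rw [Submodule.coe_neg, h]
        ext <;> simp }
  have hLmem : ∀ x, x ∈ L ↔ ∃ (z : Fin n → ℤ) (t : ℤ), x.1 = (fun i => (z i : ℝ), (t : ℝ)) :=
    fun x => Iff.rfl
  have hwL : ∀ i, w i ∈ L := fun i => ⟨i.1, 1, by simp [w, v]⟩
  have hL : ∀ x ∈ L, ∃ z : ℤ, ht x = z := by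
    rintro x ⟨z, t, h⟩
    exact ⟨t, by simp [ht, h]⟩
  have hsum : ∀ a : s → ℝ, ((∑ i, a i • w i : W) : (Fin n → ℝ) × ℝ) =
      (∑ i, a i • v i, ∑ i, a i) := by
    intro a
    ext <;> simp [w, Prod.fst_sum, Prod.snd_sum]
  have hfin : ∀ m : ℕ, {x | x ∈ L ∧ ht x = m ∧ InCone w x}.Finite := by
    intro m
    let N : Fin n → ℤ := fun k => m * ∑ i : s, |i.1 k|
    refine Set.Finite.of_finite_image (f := Subtype.val) ?_ Subtype.val_injective.injOn
    refine ((Set.finite_Icc (-N) N).image fun z => ((fun i => (z i : ℝ), (m : ℝ)) :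
      (Fin n → ℝ) × ℝ)).subset ?_
    rintro _ ⟨x, ⟨⟨z, t, hx⟩, h1, a, ha, hax⟩, rfl⟩
    have h1' : x.1.2 = m := h1
    have hs' := hsum a
    rw [hax] at hs'
    have ham : ∑ i, a i = m := by rw [← h1', hs']
    have hz : ∀ k, |z k| ≤ N k := by
      intro k
      have e1 : (z k : ℝ) = ∑ i, a i * (i.1 k : ℝ) := by
        have := congrFun (congrArg Prod.fst (hx.symm.trans hs')) k
        simpa [v] using this
      have e2 : |(z k : ℝ)| ≤ (N k : ℝ) := by
        rw [e1]
        calc |∑ i, a i * (i.1 k : ℝ)| ≤ ∑ i, |a i * (i.1 k : ℝ)| :=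
              Finset.abs_sum_le_sum_abs _ _
          _ ≤ ∑ i : s, (m : ℝ) * |(i.1 k : ℝ)| := by
              refine Finset.sum_le_sum fun i _ => ?_
              rw [abs_mul, abs_of_nonneg (ha i)]
              refine mul_le_mul_of_nonneg_right ?_ (abs_nonneg _)
              rw [← ham]
              exact Finset.single_le_sum (fun i _ => ha i) (Finset.mem_univ i)
          _ = (N k : ℝ) := by simp [N, Finset.mul_sum]
      exact_mod_cast e2
    refine ⟨z, ⟨fun k => (abs_le.1 (hz k)).1, fun k => (abs_le.1 (hz k)).2⟩, ?_⟩
    refine Prod.ext ?_ ?_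
    · simp [hx]
    · exact h1'.symm
  have hrank := finrank_span_lift v
  rw [← hΔ'] at hrank
  obtain ⟨p, hp1, hp2⟩ := ehrhart_core w ht hw hspan (finrank ℝ (vectorSpan ℝ Δ)) hrank L hwL hL hfin
  refine ⟨p, fun m => ?_, ?_⟩
  · rw [hp1 m]
    congr 1
    symm
    have hD : ∀ x : Fin n → ℝ, x ∈ (m : ℝ) • Δ ↔
        ∃ a : s → ℝ, (∀ i, 0 ≤ a i) ∧ ∑ i, a i = m ∧ ∑ i, a i • v i = x := by
      intro x
      rw [Set.mem_smul_set]
      constructor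
      · rintro ⟨y, hy, rfl⟩
        rw [hΔ', mem_hull_range] at hy
        obtain ⟨a, ha, ha1, rfl⟩ := hy
        refine ⟨fun i => m * a i, fun i => mul_nonneg (Nat.cast_nonneg _) (ha i), ?_, ?_⟩
        · rw [← Finset.mul_sum, ha1, mul_one]
        · simp [mul_smul, Finset.smul_sum]
      · rintro ⟨a, ha, ham, rfl⟩
        rcases Nat.eq_zero_or_pos m with rfl | hm
        · have ha0 : ∀ i, a i = 0 := by
            have := (Finset.sum_eq_zero_iff_of_nonneg (fun i _ => ha i)).1
              (ham.trans Nat.cast_zero)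
            exact fun i => this i (Finset.mem_univ i)
          obtain ⟨j⟩ := ‹Nonempty s›
          refine ⟨v j, ?_, ?_⟩
          · rw [hΔ']; exact subset_convexHull ℝ _ ⟨j, rfl⟩
          · simp [ha0]
        · have hm' : (0 : ℝ) < m := by exact_mod_cast hm
          refine ⟨∑ i, ((m : ℝ)⁻¹ * a i) • v i, ?_, ?_⟩
          · rw [hΔ', mem_hull_range]
            refine ⟨_, fun i => mul_nonneg (by positivity) (ha i), ?_, rfl⟩
            rw [← Finset.mul_sum, ham, inv_mul_cancel₀ hm'.ne']
          · simp only [mul_smul, ← Finset.smul_sum]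
            rw [smul_inv_smul₀ hm'.ne']
    refine card_transfer (m : ℝ) _ _ ?_ ?_
    · intro z hz
      obtain ⟨a, ha, ham, hax⟩ := (hD _).1 hz
      have h3 := hsum a
      rw [hax, ham] at h3
      refine ⟨∑ i, a i • w i, h3, ⟨z, m, by rw [h3]; simp⟩, ?_, a, ha, rfl⟩
      exact congrArg Prod.snd h3
    · rintro x ⟨⟨z, t, hx⟩, h1, a, ha, hax⟩
      have h1' : x.1.2 = m := h1
      have h3 := hsum a
      rw [hax] at h3
      refine ⟨z, (hD _).2 ⟨a, ha, ?_, ?_⟩, ?_⟩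
      · rw [← h1', h3]
      · exact congrArg Prod.fst (h3.symm.trans hx)
      · refine Prod.ext ?_ h1'
        rw [hx]
  · rw [hp2]
    congr 2
    symm
    refine card_transfer (1 : ℝ) _ _ ?_ ?_
    · intro z hz
      have hz' : (fun i => (z i : ℝ)) ∈ intrinsicInterior ℝ Δ := hz
      rw [hΔ', mem_relint_hull] at hz'
      obtain ⟨a, ha, ham, hax⟩ := hz'
      have h3 := hsum a
      rw [hax, ham] at h3
      refine ⟨∑ i, a i • w i, h3, ⟨z, 1, by rw [h3]; simp⟩, ?_, a, ha, rfl⟩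
      exact congrArg Prod.snd h3
    · rintro x ⟨⟨z, t, hx⟩, h1, a, ha, hax⟩
      have h1' : x.1.2 = 1 := h1
      have h3 := hsum a
      rw [hax] at h3
      refine ⟨z, ?_, ?_⟩
      · show (fun i => (z i : ℝ)) ∈ intrinsicInterior ℝ Δ
        rw [hΔ', mem_relint_hull]
        refine ⟨a, ha, ?_, ?_⟩
        · rw [← h1', h3]
        · exact congrArg Prod.fst (h3.symm.trans hx)
      · refine Prod.ext ?_ h1'
        rw [hx]
end
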